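/- arXiv:2011.12259 — 12 statements merged into one kernel-verified Lean document; each statement's English description precedes it below -/
import Mathlib

section
/- Every ordinally stable fractional matching of a graph with cardinal preferences is cardinally stable: if M is a fractional matching of an instance (G, sat) such that no edge is ordinally blocking, then no edge is cardinally blocking. -/
/-!
An agent `x` with `M(x, ≽ y) = w` receives at least `sat x y` from each unit of the weight `w`,
hence has utility at least `w * sat x y` (`wge_mul_sat_le_util`). So an endpoint of an edge with
utility below the satisfaction of that edge has `w < 1`, and every cardinally blocking edge is
ordinally blocking.
-/

open Finset
open scoped Classical

variable {V : Type*}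

/-- Two agents find each other acceptable iff at least one of them assigns
positive satisfaction to the other. -/
def Adj (sat : V → V → ℚ) (u v : V) : Prop :=
  0 < sat u v ∨ 0 < sat v u

instance (sat : V → V → ℚ) (u v : V) : Decidable (Adj sat u v) :=
  inferInstanceAs (Decidable (0 < sat u v ∨ 0 < sat v u))

/-- `sat` describes a valid instance: satisfactions are nonnegative, an agent has
zero satisfaction towards itself, and the acceptability graph has no isolated vertices. -/
structure IsInstance [Fintype V] (sat : V → V → ℚ) : Prop where
  nonneg : ∀ u v, 0 ≤ sat u v
  sat_self : ∀ u, sat u u = 0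
  noIsolated : ∀ v, ∃ u, Adj sat v u

/-- `M` is a fractional matching of the acceptability graph of `sat`. -/
structure IsMatching [Fintype V] (sat : V → V → ℚ) (M : V → V → ℝ) : Prop where
  symm : ∀ u v, M u v = M v u
  nonneg : ∀ u v, 0 ≤ M u v
  support : ∀ u v, ¬ Adj sat u v → M u v = 0
  degree_le_one : ∀ v, ∑ u, M v u ≤ 1

/-- `M(x, ≽ y)`: total matching value of `x` with neighbours liked at least as much as `y`. -/
noncomputable def wge [Fintype V] (sat : V → V → ℚ) (M : V → V → ℝ) (x y : V) : ℝ :=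
  ∑ z ∈ Finset.univ.filter (fun z => Adj sat x z ∧ sat x y ≤ sat x z), M x z

/-- `M(x, ≻ y)`: total matching value of `x` with neighbours strictly preferred to `y`. -/
noncomputable def wgt [Fintype V] (sat : V → V → ℚ) (M : V → V → ℝ) (x y : V) : ℝ :=
  ∑ z ∈ Finset.univ.filter (fun z => Adj sat x z ∧ sat x y < sat x z), M x z

/-- Utility of agent `v` under matching `M`. -/
noncomputable def util [Fintype V] (sat : V → V → ℚ) (M : V → V → ℝ) (v : V) : ℝ :=
  ∑ u, (sat v u : ℝ) * M v u

/-- Social welfare of a matching. -/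
noncomputable def welfare [Fintype V] (sat : V → V → ℚ) (M : V → V → ℝ) : ℝ :=
  ∑ v, util sat M v

/-- Ordinal stability: no edge is ordinally blocking. -/
def OrdStable [Fintype V] (sat : V → V → ℚ) (M : V → V → ℝ) : Prop :=
  ∀ u v, Adj sat u v → ¬ (wge sat M u v < 1 ∧ wge sat M v u < 1)

/-- Cardinal stability: no edge is cardinally blocking. -/
def CardStable [Fintype V] (sat : V → V → ℚ) (M : V → V → ℝ) : Prop :=
  ∀ u v, Adj sat u v → ¬ (util sat M u < (sat u v : ℝ) ∧ util sat M v < (sat v u : ℝ))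

/-- Linear stability: no edge is linearly blocking. -/
def LinStable [Fintype V] (sat : V → V → ℚ) (M : V → V → ℝ) : Prop :=
  ∀ u v, Adj sat u v → ¬ (wge sat M u v + wge sat M v u - M u v < 1)

/-- Strict preferences: no ties among distinct neighbours. -/
def StrictPrefs (sat : V → V → ℚ) : Prop :=
  ∀ v x y, Adj sat v x → Adj sat v y → x ≠ y → sat v x ≠ sat v y

/-- The acceptability graph is bipartite with parts `U` and its complement. -/
def BipartiteWith (sat : V → V → ℚ) (U : Set V) : Prop :=
  ∀ u v, Adj sat u v → (u ∈ U ↔ v ∉ U)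

/-- Integral matching. -/
def IntegralMatching (M : V → V → ℝ) : Prop := ∀ u v, M u v = 0 ∨ M u v = 1

/-- Number of fully matched agents. -/
noncomputable def nfully [Fintype V] (M : V → V → ℝ) : ℕ :=
  (Finset.univ.filter (fun v => ∑ u, M v u = (1 : ℝ))).card

theorem wge_mul_sat_le_util [Fintype V] {sat : V → V → ℚ} (hinst : IsInstance sat)
    {M : V → V → ℝ} (hM : IsMatching sat M) (x y : V) :
    wge sat M x y * (sat x y : ℝ) ≤ util sat M x := by
  unfold wge util
  rw [Finset.sum_mul]
  calc _ ≤ ∑ z ∈ Finset.univ.filter (fun z => Adj sat x z ∧ sat x y ≤ sat x z),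
        (sat x z : ℝ) * M x z := by
        refine Finset.sum_le_sum fun z hz => ?_
        rw [mul_comm]
        have h : (sat x y : ℝ) ≤ sat x z := by exact_mod_cast (Finset.mem_filter.mp hz).2.2
        exact mul_le_mul_of_nonneg_right h (hM.nonneg x z)
    _ ≤ _ := Finset.sum_le_sum_of_subset_of_nonneg (Finset.filter_subset _ _)
        fun z _ _ => mul_nonneg (by exact_mod_cast hinst.nonneg x z) (hM.nonneg x z)

theorem wge_lt_one_of_util_lt [Fintype V] {sat : V → V → ℚ} (hinst : IsInstance sat)
    {M : V → V → ℝ} (hM : IsMatching sat M) {x y : V} (h : util sat M x < (sat x y : ℝ)) :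
    wge sat M x y < 1 := by
  by_contra! hw
  have h0 : (0 : ℝ) ≤ sat x y := by exact_mod_cast hinst.nonneg x y
  exact absurd ((le_mul_of_one_le_left h0 hw).trans (wge_mul_sat_le_util hinst hM x y)) h.not_ge

/-- Every ordinally stable fractional matching is cardinally stable. -/
theorem ordinallyStable_implies_cardinallyStable [Fintype V]
    (sat : V → V → ℚ) (hinst : IsInstance sat)
    (M : V → V → ℝ) (hM : IsMatching sat M) (hOS : OrdStable sat M) :
    CardStable sat M := by
  intro u v huv ⟨hu, hv⟩
  exact hOS u v huv ⟨wge_lt_one_of_util_lt hinst hM hu, wge_lt_one_of_util_lt hinst hM hv⟩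
end

section
/- There exists a graph G with strict cardinal preferences sat such that (G, sat) admits a linearly stable fractional matching that is neither ordinally stable nor cardinally stable, and (G, sat) also admits a cardinally stable fractional matching that is neither linearly stable nor ordinally stable. -/
/-!
The instance is the cyclic bipartite market with men `0, 1, 2` and women `3, 4, 5`.
Modulo 3, man `i` ranks the women `i, i + 1, i + 2` with satisfactions `4, 3, 1`, and the
satisfactions of the women along these three classes of edges are `1, 3, 4`. Each class is a
perfect matching and is stable: call them the man-optimal, the middle and the woman-optimal one.

* Half of the man-optimal plus half of the woman-optimal matching is linearly stable, being a
  convex combination of stable matchings. Every middle edge blocks it ordinally, as both ends have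
  weight only `1/2` on partners at least as good, and cardinally, as both utilities are
  `(4 + 1) / 2 < 3`.
* Weight `3/7` on the man-optimal and on the middle matching gives the men utility
  `3/7 * (4 + 3) = 3` and the women `3/7 * (1 + 3) = 12/7`. Men then block no middle or woman-optimal
  edge and women no man-optimal edge, so this is cardinally stable. Every agent has total weight
  `6/7 < 1`, and a man-optimal edge blocks both ordinally and linearly.

Both matchings are rational, so all conditions are transferred from `ℝ` to `ℚ`, where they are
finitely many decidable comparisons.
-/

open Finset
open scoped Classical

variable {V : Type*}

/-- The satisfactions in the cyclic market; rows are agents, `0, 1, 2` are men, `3, 4, 5` women. -/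
def cyclicSat : Fin 6 → Fin 6 → ℚ :=
  ![![0, 0, 0, 4, 3, 1],
    ![0, 0, 0, 1, 4, 3],
    ![0, 0, 0, 3, 1, 4],
    ![1, 4, 3, 0, 0, 0],
    ![3, 1, 4, 0, 0, 0],
    ![4, 3, 1, 0, 0, 0]]

/-- Half of the man-optimal plus half of the woman-optimal stable matching. -/
def extremeMix : Fin 6 → Fin 6 → ℚ :=
  ![![0, 0, 0, 1/2, 0, 1/2],
    ![0, 0, 0, 1/2, 1/2, 0],
    ![0, 0, 0, 0, 1/2, 1/2],
    ![1/2, 1/2, 0, 0, 0, 0],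
    ![0, 1/2, 1/2, 0, 0, 0],
    ![1/2, 0, 1/2, 0, 0, 0]]

/-- Weight `3/7` on each of the man-optimal and the middle stable matching. -/
def deficientMix : Fin 6 → Fin 6 → ℚ :=
  ![![0, 0, 0, 3/7, 3/7, 0],
    ![0, 0, 0, 0, 3/7, 3/7],
    ![0, 0, 0, 3/7, 0, 3/7],
    ![3/7, 0, 3/7, 0, 0, 0],
    ![3/7, 3/7, 0, 0, 0, 0],
    ![0, 3/7, 3/7, 0, 0, 0]]

section RationalMatchings

variable {n : ℕ} (sat q : Fin n → Fin n → ℚ)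

/-- `wge` for a rational matching, computed in `ℚ`. -/
def ratWge (x y : Fin n) : ℚ :=
  ∑ z, if Adj sat x z ∧ sat x y ≤ sat x z then q x z else 0

/-- `util` for a rational matching, computed in `ℚ`. -/
def ratUtil (v : Fin n) : ℚ := ∑ u, sat v u * q v u

lemma wge_cast (x y : Fin n) :
    wge sat (fun u v => (q u v : ℝ)) x y = (ratWge sat q x y : ℝ) := by
  unfold wge ratWge
  rw [Finset.sum_filter, Rat.cast_sum]
  refine Finset.sum_congr rfl fun z _ => ?_
  split_ifs <;> simp

lemma util_cast (v : Fin n) :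
    util sat (fun u v => (q u v : ℝ)) v = (ratUtil sat q v : ℝ) := by
  unfold util ratUtil
  push_cast
  rfl

lemma isMatching_cast
    (h : (∀ u v, q u v = q v u) ∧ (∀ u v, 0 ≤ q u v) ∧ (∀ u v, ¬ Adj sat u v → q u v = 0) ∧
      ∀ v, ∑ u, q v u ≤ 1) :
    IsMatching sat (fun u v => (q u v : ℝ)) where
  symm u v := by exact_mod_cast h.1 u v
  nonneg u v := by exact_mod_cast h.2.1 u v
  support u v huv := by exact_mod_cast h.2.2.1 u v huv
  degree_le_one v := by exact_mod_cast h.2.2.2 v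

lemma ordStable_cast :
    OrdStable sat (fun u v => (q u v : ℝ)) ↔
      ∀ u v, Adj sat u v → ¬ (ratWge sat q u v < 1 ∧ ratWge sat q v u < 1) := by
  simp only [OrdStable, wge_cast]
  norm_cast

lemma cardStable_cast :
    CardStable sat (fun u v => (q u v : ℝ)) ↔
      ∀ u v, Adj sat u v → ¬ (ratUtil sat q u < sat u v ∧ ratUtil sat q v < sat v u) := by
  simp only [CardStable, util_cast]
  norm_cast

lemma linStable_cast :
    LinStable sat (fun u v => (q u v : ℝ)) ↔
      ∀ u v, Adj sat u v → ¬ (ratWge sat q u v + ratWge sat q v u - q u v < 1) := by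
  simp only [LinStable, wge_cast]
  norm_cast

end RationalMatchings

/-- There is an instance with strict preferences admitting a linearly stable
matching that is neither ordinally nor cardinally stable, and a cardinally stable matching
that is neither linearly nor ordinally stable. -/
theorem exists_instance_LSM_not_OSM_CSM_and_CSM_not_LSM_OSM :
    ∃ (n : ℕ) (sat : Fin n → Fin n → ℚ),
      IsInstance sat ∧ StrictPrefs sat ∧
      (∃ M : Fin n → Fin n → ℝ, IsMatching sat M ∧ LinStable sat M ∧
        ¬ OrdStable sat M ∧ ¬ CardStable sat M) ∧
      (∃ M : Fin n → Fin n → ℝ, IsMatching sat M ∧ CardStable sat M ∧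
        ¬ LinStable sat M ∧ ¬ OrdStable sat M) := by
  refine ⟨6, cyclicSat, ⟨by decide +kernel, by decide +kernel, by decide +kernel⟩, ?_,
    ⟨fun u v => (extremeMix u v : ℝ), isMatching_cast _ _ (by decide +kernel), ?_, ?_, ?_⟩,
    ⟨fun u v => (deficientMix u v : ℝ), isMatching_cast _ _ (by decide +kernel), ?_, ?_, ?_⟩⟩
  · unfold StrictPrefs
    decide +kernel
  · rw [linStable_cast]
    decide +kernel
  · rw [ordStable_cast]
    decide +kernel
  · rw [cardStable_cast]
    decide +kernel
  · rw [cardStable_cast]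
    decide +kernel
  · rw [linStable_cast]
    decide +kernel
  · rw [ordStable_cast]
    decide +kernel
end

section
/- Every graph with cardinal preferences (possibly with ties) admits an ordinally stable fractional matching M that is half-integral and in which every matched agent is fully matched; in particular, such an M is also cardinally stable. -/
/-!
Break ties arbitrarily: each agent `v` gets an injective ranking `r v` refining `sat v`, and a
matching stable for the refined rankings is stable for `sat`.  For strict preferences the proof is
a minimality version of Irving's algorithm together with Tan's analysis of odd parties.

A *table* is a symmetric subrelation `T` of the acceptability graph; `First T u v` says that `v` is
the best entry in the list of `u`.  A table is good (`GoodTable`) if every edge outside of it is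
rejected by an endpoint that is the first choice of somebody better.  The full graph is good, so
there is an inclusion-minimal good table `T`.  Cutting the lists of receivers of a system of
proposals preserves goodness if every proposal survives as a first choice (`good_cut`), so by
minimality such a cut removes nothing (`cut_trivial`).  Consequences:

* Cutting along one first choice: if `v` is first for `u`, then `u` is last for `v`.  Hence "first"
  `f` is a bijection on the agents with a nonempty list, with inverse "last" `l`.
* Let `s` be "second" and `D` the set of agents with at least two entries.  The map `n = l ∘ s`
  preserves `D`; let `C` be a minimal nonempty `n`-closed subset of `D` (a rotation).  Cutting along
  the proposals `x → s x`, `x ∈ C`, would remove something, so some proposal does not survive.  This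
  propagates backwards along `n` and shows that on `C` all lists have length two and stay in `C`
  (an odd party; `rotation_short`).  It follows that all lists have length at most two
  (`lists_short`).

Giving weight one half to each of the ordered pairs `First T u v` then yields the matching.
-/

open Finset
open scoped Classical

variable {V : Type*}

/-! ### Tables and cuts -/

/-- `v` is the best entry in the list of `u` in the table `T`, where larger `r u` is better. -/
def First {α : Type*} [LinearOrder α] (r : V → V → α) (T : V → V → Prop) (u v : V) : Prop :=
  T u v ∧ ∀ w, T u w → r u w ≤ r u v

/-- A symmetric subrelation `T` of `E` such that each edge outside `T` has an endpoint which is the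
first choice in `T` of somebody it strictly prefers to the other endpoint. -/
structure GoodTable {α : Type*} [LinearOrder α] (E : V → V → Prop) (r : V → V → α)
    (T : V → V → Prop) : Prop where
  sub : ∀ u v, T u v → E u v
  symm : ∀ u v, T u v → T v u
  out : ∀ u v, E u v → ¬ T u v →
    (∃ t, First r T t u ∧ r u v < r u t) ∨ (∃ t, First r T t v ∧ r v u < r v t)

/-- The table left after every agent receiving proposals (`P t u`: `t` proposes to `u`) deletes all
entries worse than one of its proposers. -/
def cut {α : Type*} [LinearOrder α] (r : V → V → α) (T P : V → V → Prop) (u v : V) : Prop :=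
  T u v ∧ (∀ t, P t u → r u t ≤ r u v) ∧ (∀ t, P t v → r v t ≤ r v u)

lemma good_cut {α : Type*} [LinearOrder α] {E : V → V → Prop} {r : V → V → α}
    {T P : V → V → Prop} (hT : GoodTable E r T)
    (hP : ∀ x y, P x y → First r (cut r T P) x y) : GoodTable E r (cut r T P) := by
  -- A witness for the old table either survives or is displaced by a better proposer.
  have key : ∀ t u v, First r T t u → r u v < r u t →
      ∃ t, First r (cut r T P) t u ∧ r u v < r u t := by
    intro t u v htu hlt
    by_cases hc : cut r T P t u
    · exact ⟨t, ⟨hc, fun w hw => htu.2 w hw.1⟩, hlt⟩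
    · by_cases h2 : ∀ s, P s u → r u s ≤ r u t
      · exfalso
        refine hc ⟨htu.1, fun s hs => htu.2 s (hT.symm _ _ (hP s t hs).1.1), h2⟩
      · push Not at h2
        obtain ⟨s, hs, hlt'⟩ := h2
        exact ⟨s, hP _ _ hs, hlt.trans hlt'⟩
  refine ⟨fun u v h => hT.sub u v h.1, fun u v h => ⟨hT.symm _ _ h.1, h.2.2, h.2.1⟩, ?_⟩
  intro u v hE hc
  by_cases hTuv : T u v
  · by_cases h1 : ∀ t, P t u → r u t ≤ r u v
    · by_cases h2 : ∀ t, P t v → r v t ≤ r v u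
      · exact absurd ⟨hTuv, h1, h2⟩ hc
      · push Not at h2
        obtain ⟨t, ht, hlt⟩ := h2
        exact Or.inr ⟨t, hP _ _ ht, hlt⟩
    · push Not at h1
      obtain ⟨t, ht, hlt⟩ := h1
      exact Or.inl ⟨t, hP _ _ ht, hlt⟩
  · rcases hT.out u v hE hTuv with ⟨t, ht, hlt⟩ | ⟨t, ht, hlt⟩
    · exact Or.inl (key _ _ _ ht hlt)
    · exact Or.inr (key _ _ _ ht hlt)

lemma cut_trivial {α : Type*} [LinearOrder α] {E : V → V → Prop} {r : V → V → α}
    {T P : V → V → Prop} (hT : Minimal (GoodTable E r) T)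
    (hP : ∀ x y, P x y → First r (cut r T P) x y) {u v : V} (huv : T u v) : cut r T P u v :=
  hT.2 (good_cut hT.1 hP) (fun _ _ h => h.1) u v huv

/-- In a minimal good table, the agent to whom `v` is the first choice is the last entry of `v`. -/
lemma first_last {α : Type*} [LinearOrder α] {E : V → V → Prop} {r : V → V → α}
    {T : V → V → Prop} (hT : Minimal (GoodTable E r) T) {u v w : V}
    (huv : First r T u v) (hvw : T v w) : r v u ≤ r v w := by
  have h := cut_trivial (P := fun x y => x = u ∧ y = v) hT ?_ hvw
  · exact h.2.1 u ⟨rfl, rfl⟩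
  · rintro x y ⟨rfl, rfl⟩
    refine ⟨⟨huv.1, ?_, ?_⟩, fun w hw => huv.2 w hw.1⟩
    · rintro t ⟨rfl, rfl⟩
      exact le_rfl
    · rintro t ⟨rfl, -⟩
      exact le_rfl

/-! ### Rotations -/

/-- `f u`, `l u`, `s u` are the first, last and second entries of the list of `u` in `T`, and the
last entry of `u` is the agent whose first entry is `u`.  The functions are unconstrained where the
corresponding entry does not exist. -/
structure Entries {α : Type*} [LinearOrder α] (r : V → V → α) (T : V → V → Prop)
    (f l s : V → V) : Prop where
  inj : ∀ v, Function.Injective (r v)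
  symm : ∀ u v, T u v → T v u
  first : ∀ u v, T u v → First r T u (f u)
  last : ∀ u v, T u v → First r T (l u) u
  first_le : ∀ u v w, First r T u v → T v w → r v u ≤ r v w
  second : ∀ u v w, T u v → T u w → v ≠ w → T u (s u)
  second_ne : ∀ u v w, T u v → T u w → v ≠ w → s u ≠ f u
  le_second : ∀ u v, T u v → v ≠ f u → r u v ≤ r u (s u)

/-- The agents whose list has at least two entries. -/
def Long (T : V → V → Prop) : Set V := {u | ∃ v w, T u v ∧ T u w ∧ v ≠ w}

lemma exists_entries [Finite V] {α : Type*} [LinearOrder α] {E : V → V → Prop} {r : V → V → α}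
    (hr : ∀ v, Function.Injective (r v)) {T : V → V → Prop} (hT : Minimal (GoodTable E r) T) :
    ∃ f l s, Entries r T f l s := by
  have hf : ∀ u, ∃ v, (∃ w, T u w) → First r T u v := by
    intro u
    by_cases h : ∃ w, T u w
    · obtain ⟨v, hv, hmax⟩ := Set.exists_max_image {w | T u w} (r u) (Set.toFinite _) h
      exact ⟨v, fun _ => ⟨hv, hmax⟩⟩
    · exact ⟨u, fun h' => absurd h' h⟩
  choose f hf using hf
  have hl : ∀ v, ∃ u, (∃ w, T v w) → First r T u v := by
    intro v
    by_cases h : ∃ w, T v w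
    · let A : Set V := {u | ∃ w, T u w}
      have hmaps : Set.MapsTo f A A := fun u hu => ⟨u, hT.1.symm _ _ (hf u hu).1⟩
      have hinj : Set.InjOn f A := by
        intro u hu u' hu' he
        have h1 := hf u hu
        have h2 := hf u' hu'
        rw [← he] at h2
        exact hr (f u) (le_antisymm (first_last hT h1 (hT.1.symm _ _ h2.1))
          (first_last hT h2 (hT.1.symm _ _ h1.1)))
      obtain ⟨u, hu, huv⟩ := ((A.toFinite.injOn_iff_bijOn_of_mapsTo hmaps).mp hinj).surjOn h
      exact ⟨u, fun _ => huv ▸ hf u hu⟩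
    · exact ⟨v, fun h' => absurd h' h⟩
  choose l hl using hl
  have hs : ∀ u, ∃ v, (∃ w, T u w ∧ w ≠ f u) →
      (T u v ∧ v ≠ f u) ∧ ∀ w, T u w ∧ w ≠ f u → r u w ≤ r u v := by
    intro u
    by_cases h : ∃ w, T u w ∧ w ≠ f u
    · obtain ⟨v, hv, hmax⟩ :=
        Set.exists_max_image {w | T u w ∧ w ≠ f u} (r u) (Set.toFinite _) h
      exact ⟨v, fun _ => ⟨hv, hmax⟩⟩
    · exact ⟨u, fun h' => absurd h' h⟩
  choose s hs using hs
  have hex : ∀ u v w, T u v → T u w → v ≠ w → ∃ w, T u w ∧ w ≠ f u := by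
    intro u v w hv hw hne
    by_cases h : v = f u
    · exact ⟨w, hw, fun h' => hne (h.trans h'.symm)⟩
    · exact ⟨v, hv, h⟩
  exact ⟨f, l, s, hr, hT.1.symm, fun u v h => hf u ⟨v, h⟩, fun u v h => hl u ⟨v, h⟩,
    fun u v w h hw => first_last hT h hw,
    fun u v w hv hw hne => (hs u (hex u v w hv hw hne)).1.1,
    fun u v w hv hw hne => (hs u (hex u v w hv hw hne)).1.2,
    fun u v hv hne => (hs u ⟨v, hv, hne⟩).2 v ⟨hv, hne⟩⟩

namespace Entries

variable {α : Type*} [LinearOrder α] {r : V → V → α} {T : V → V → Prop} {f l s : V → V}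

lemma eq_first (h : Entries r T f l s) {u v : V} (huv : First r T u v) : v = f u :=
  h.inj u (le_antisymm ((h.first u v huv.1).2 v huv.1) (huv.2 _ (h.first u v huv.1).1))

lemma first_l (h : Entries r T f l s) {u v : V} (huv : T u v) : f (l u) = u :=
  (h.eq_first (h.last u v huv)).symm

lemma eq_last (h : Entries r T f l s) {u v : V} (huv : First r T u v) : u = l v := by
  have hvu := h.symm _ _ huv.1
  have hl := h.last v u hvu
  exact h.inj v (le_antisymm (h.first_le u v _ huv (h.symm _ _ hl.1)) (h.first_le _ v _ hl hvu))

lemma last_f (h : Entries r T f l s) {u v : V} (huv : T u v) : l (f u) = u :=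
  (h.eq_last (h.first u v huv)).symm

lemma T_s (h : Entries r T f l s) {u : V} (hu : u ∈ Long T) : T u (s u) := by
  obtain ⟨v, w, hv, hw, hne⟩ := hu
  exact h.second u v w hv hw hne

lemma s_ne (h : Entries r T f l s) {u : V} (hu : u ∈ Long T) : s u ≠ f u := by
  obtain ⟨v, w, hv, hw, hne⟩ := hu
  exact h.second_ne u v w hv hw hne

lemma T_f (h : Entries r T f l s) {u v : V} (huv : T u v) : T u (f u) := (h.first u v huv).1

lemma T_l (h : Entries r T f l s) {u v : V} (huv : T u v) : T u (l u) :=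
  h.symm _ _ (h.last u v huv).1

/-- A list whose second entry is its last has only its first and last entries. -/
lemma eq_or_eq (h : Entries r T f l s) {u v : V} (hsl : s u = l u) (huv : T u v) :
    v = f u ∨ v = l u := by
  by_cases hv : v = f u
  · exact Or.inl hv
  · right
    have h1 := h.le_second u v huv hv
    rw [hsl] at h1
    exact h.inj u (le_antisymm h1 (h.first_le _ _ _ (h.last u v huv) huv))

lemma f_n (h : Entries r T f l s) {u : V} (hu : u ∈ Long T) : f (l (s u)) = s u :=
  h.first_l (h.symm _ _ (h.T_s hu))

lemma n_ne (h : Entries r T f l s) {u : V} (hu : u ∈ Long T) : l (s u) ≠ u := by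
  intro he
  have h1 := h.f_n hu
  rw [he] at h1
  exact h.s_ne hu h1.symm

lemma n_long (h : Entries r T f l s) {u : V} (hu : u ∈ Long T) : l (s u) ∈ Long T := by
  have hsu := h.symm _ _ (h.T_s hu)
  have hw : T (l (s u)) (s u) := h.symm _ _ (h.T_l hsu)
  refine ⟨s u, l (l (s u)), hw, h.T_l hw, fun he => h.n_ne hu ?_⟩
  -- otherwise `l (s u)` is both the first and the last entry of `s u`, which leaves no room for `u`
  have h1 := h.last _ _ hw
  rw [← he] at h1
  exact h.inj (s u) (le_antisymm (h.first_le _ _ _ (h.last _ _ hsu) hsu) (h1.2 u hsu))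

/-- Nonempty sets of agents with long lists that are closed under `l ∘ s`; the minimal ones are the
rotations. -/
def Closed (T : V → V → Prop) (l s : V → V) (C : Set V) : Prop :=
  C ⊆ Long T ∧ C.Nonempty ∧ ∀ x ∈ C, l (s x) ∈ C

/-- In a rotation of a minimal good table all lists have length two and stay in the rotation. -/
lemma rotation_short [Finite V] {E : V → V → Prop} (h : Entries r T f l s)
    (hT : Minimal (GoodTable E r) T) {C : Set V} (hC : Minimal (Closed T l s) C) :
    ∀ x ∈ C, f x ∈ C ∧ l x ∈ C ∧ s x = l x := by
  obtain ⟨hCL, hne, hcl⟩ := hC.1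
  have hsub : ∀ C' : Set V, C' ⊆ C → C'.Nonempty → (∀ x ∈ C', l (s x) ∈ C') → C ⊆ C' :=
    fun C' h1 h2 h3 => hC.2 ⟨h1.trans hCL, h2, h3⟩ h1
  have hsurj : ∀ x ∈ C, ∃ y ∈ C, l (s y) = x := by
    refine hsub (Set.image (fun x => l (s x)) C) ?_ (hne.image _) ?_
    · rintro _ ⟨x, hx, rfl⟩
      exact hcl x hx
    · rintro _ ⟨x, hx, rfl⟩
      exact ⟨_, hcl x hx, rfl⟩
  have hinj : Set.InjOn (fun x => l (s x)) C :=
    ((C.toFinite.surjOn_iff_bijOn_of_mapsTo fun x hx => hcl x hx).mp fun x hx => hsurj x hx).injOn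
  -- The proposals along the rotation cannot all survive.
  have hbad : ∃ x ∈ C, ¬ cut r T (fun x y => x ∈ C ∧ y = s x) x (s x) := by
    by_contra! hall
    have hnf : ∀ x ∈ C, ¬ cut r T (fun x y => x ∈ C ∧ y = s x) x (f x) := by
      intro x hx hc
      obtain ⟨y, hy, rfl⟩ := hsurj x hx
      have hfn := h.f_n (hCL hy)
      have hsy := h.symm _ _ (h.T_s (hCL hy))
      rw [hfn] at hc
      have h1 := hc.2.2 y ⟨hy, rfl⟩
      have h2 := h.first_le _ _ _ (h.last _ _ hsy) hsy
      exact h.n_ne (hCL hy) (h.inj _ (le_antisymm h2 h1))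
    obtain ⟨x, hx⟩ := hne
    refine hnf x hx (cut_trivial hT ?_ (h.T_f (h.T_s (hCL hx))))
    rintro x y ⟨hx, rfl⟩
    refine ⟨hall x hx, fun w hw => h.le_second x w hw.1 ?_⟩
    rintro rfl
    exact hnf x hx hw
  have hQ : ∃ x ∈ C, f x ∈ C ∧ s (f x) = x := by
    obtain ⟨x, hx, hcx⟩ := hbad
    have hxs := h.T_s (hCL hx)
    by_cases h1 : ∀ t, (t ∈ C ∧ x = s t) → r x t ≤ r x (s x)
    · exfalso
      refine hcx ⟨hxs, h1, ?_⟩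
      rintro t ⟨ht, hst⟩
      have : t = x := hinj ht hx (by simp only [hst])
      rw [this]
    · push Not at h1
      obtain ⟨t, ⟨ht, hst⟩, hlt⟩ := h1
      have htx : T x t := by
        have := h.symm _ _ (h.T_s (hCL ht))
        rwa [← hst] at this
      have : t = f x := by
        by_contra hne'
        exact absurd (h.le_second x t htx hne') (not_le.mpr hlt)
      subst this
      exact ⟨x, hx, ht, hst.symm⟩
  -- The failure at `l (s y)` propagates to `y`, and makes the list of `y` short.
  have hback : ∀ y ∈ C, f (l (s y)) ∈ C → s (f (l (s y))) = l (s y) →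
      (f y ∈ C ∧ s (f y) = y) ∧ s y ∈ C ∧ s y = l y := by
    intro y hy hz hsz
    rw [h.f_n (hCL hy)] at hz hsz
    have hTzy := h.symm _ _ (h.T_s (hCL hy))
    have hyz : y = f (s y) := by
      rcases h.eq_or_eq hsz hTzy with h1 | h1
      · exact h1
      · exact absurd h1.symm (h.n_ne (hCL hy))
    have hly : s y = l y := by
      have := h.last_f hTzy
      rw [← hyz] at this
      exact this.symm
    obtain ⟨w, hw, hwz⟩ := hsurj _ hz
    have hsw : s w = y := by
      have := h.f_n (hCL hw)
      rw [hwz, ← hyz] at this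
      exact this.symm
    have hTyw : T y w := by
      have := h.symm _ _ (h.T_s (hCL hw))
      rwa [hsw] at this
    have hwf : w = f y := by
      rcases h.eq_or_eq hly hTyw with h1 | h1
      · exact h1
      · exact absurd (by rw [hwz, h1, hly]) (h.n_ne (hCL hw))
    subst hwf
    exact ⟨⟨hw, hsw⟩, hz, hly⟩
  have hall : ∀ x ∈ C, f x ∈ C ∧ s (f x) = x := by
    by_contra! hex
    obtain ⟨x, hx, hnx⟩ := hex
    obtain ⟨q, hq, hq'⟩ := hQ
    have := hsub {x | x ∈ C ∧ ¬ (f x ∈ C ∧ s (f x) = x)} (fun x hx => hx.1)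
      ⟨x, hx, fun h' => hnx h'.1 h'.2⟩
      (fun y hy => ⟨hcl y hy.1, fun h' => hy.2 (hback y hy.1 h'.1 h'.2).1⟩)
    exact (this hq).2 hq'
  intro x hx
  obtain ⟨h1, h2⟩ := hall _ (hcl x hx)
  obtain ⟨-, h3, h4⟩ := hback x hx h1 h2
  exact ⟨(hall x hx).1, h4 ▸ h3, h4⟩

lemma exists_rotation [Finite V] {C : Set V} (hC : Closed T l s C) :
    ∃ C' ⊆ C, Minimal (Closed T l s) C' :=
  exists_minimal_le_of_wellFoundedLT (Closed T l s) C hC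

/-- In a minimal good table every list has at most two entries. -/
lemma lists_short [Finite V] {E : V → V → Prop} (h : Entries r T f l s)
    (hT : Minimal (GoodTable E r) T) {u v : V} (huv : T u v) : v = f u ∨ v = l u := by
  by_cases hu : u ∈ Long T
  · -- The long-list agents outside of all rotations form a closed set, hence there are none.
    have hrot : ∃ C, Minimal (Closed T l s) C ∧ u ∈ C := by
      by_contra hno
      obtain ⟨C, hCs, hC⟩ := exists_rotation (T := T) (l := l) (s := s)
        (C := {u | u ∈ Long T ∧ ¬ ∃ C, Minimal (Closed T l s) C ∧ u ∈ C})
        ⟨fun x hx => hx.1, ⟨u, hu, hno⟩, by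
          rintro x ⟨hx, hxno⟩
          refine ⟨h.n_long hx, ?_⟩
          rintro ⟨C, hC, hxC⟩
          have hshort := h.rotation_short hT hC
          have hs : s x ∈ C := by
            have := (hshort _ hxC).1
            rwa [h.f_n hx] at this
          refine hxno ⟨C, hC, ?_⟩
          obtain ⟨h1, h2, h3⟩ := hshort _ hs
          rcases h.eq_or_eq h3 (h.symm _ _ (h.T_s hx)) with h4 | h4
          · rw [h4]
            exact h1
          · rw [h4]
            exact h2⟩
      obtain ⟨x, hx⟩ := hC.1.2.1
      exact (hCs hx).2 ⟨C, hC, hx⟩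
    obtain ⟨C, hC, huC⟩ := hrot
    exact h.eq_or_eq (h.rotation_short hT hC u huC).2.2 huv
  · left
    by_contra hne
    exact hu ⟨v, f u, huv, h.T_f huv, hne⟩

end Entries

/-! ### Stable partitions and the matching -/

/-- Existence of stable partitions for strict preferences: `F u v` says that `v` is the successor
of `u` in the partition, and each edge has an endpoint that weakly prefers both its successor and
its predecessor to the other endpoint. -/
lemma exists_stable_partition [Finite V] {α : Type*} [LinearOrder α] (E : V → V → Prop)
    (hE : ∀ u v, E u v → E v u) (r : V → V → α) (hr : ∀ v, Function.Injective (r v)) :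
    ∃ F : V → V → Prop, (∀ u v, F u v → E u v) ∧
      (∀ u v w, F u v → F u w → v = w) ∧ (∀ u v w, F v u → F w u → v = w) ∧
      (∀ u, (∃ v, F u v) ↔ ∃ v, F v u) ∧
      ∀ u v, E u v → (∃ a b, F u a ∧ F b u ∧ r u v ≤ r u a ∧ r u v ≤ r u b) ∨
        (∃ a b, F v a ∧ F b v ∧ r v u ≤ r v a ∧ r v u ≤ r v b) := by
  obtain ⟨T, -, hT⟩ := exists_minimal_le_of_wellFoundedLT (GoodTable E r) E
    ⟨fun _ _ h => h, hE, fun u v h h' => absurd h h'⟩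
  obtain ⟨f, l, s, h⟩ := exists_entries hr hT
  refine ⟨First r T, fun u v huv => hT.1.sub _ _ huv.1,
    fun u v w h1 h2 => (h.eq_first h1).trans (h.eq_first h2).symm,
    fun u v w h1 h2 => (h.eq_last h1).trans (h.eq_last h2).symm, fun u => ⟨?_, ?_⟩, ?_⟩
  · rintro ⟨v, hv⟩
    exact ⟨_, h.last _ _ hv.1⟩
  · rintro ⟨v, hv⟩
    exact ⟨_, h.first _ _ (h.symm _ _ hv.1)⟩
  · have hin : ∀ u v, T u v → v = l u →
        ∃ a b, First r T u a ∧ First r T b u ∧ r u v ≤ r u a ∧ r u v ≤ r u b := by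
      intro u v huv hv
      exact ⟨f u, l u, h.first u v huv, h.last u v huv, (h.first u v huv).2 v huv, by rw [hv]⟩
    have hout : ∀ u v t, First r T t u → r u v < r u t →
        ∃ a b, First r T u a ∧ First r T b u ∧ r u v ≤ r u a ∧ r u v ≤ r u b := by
      intro u v t ht hlt
      have hut := h.symm _ _ ht.1
      exact ⟨f u, t, h.first u t hut, ht, hlt.le.trans ((h.first u t hut).2 t hut), hlt.le⟩
    intro u v huv
    by_cases hTuv : T u v
    · rcases h.lists_short hT hTuv with hv | hv
      · right
        refine hin v u (h.symm _ _ hTuv) ?_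
        rw [hv, h.last_f hTuv]
      · exact Or.inl (hin u v hTuv hv)
    · rcases hT.1.out u v huv hTuv with ⟨t, ht, hlt⟩ | ⟨t, ht, hlt⟩
      · exact Or.inl (hout u v t ht hlt)
      · exact Or.inr (hout v u t ht hlt)

/-- Arbitrary tie-breaking. -/
lemma exists_strict_refinement [Finite V] (sat : V → V → ℚ) :
    ∃ r : V → V → ℚ ×ₗ ℕ, (∀ v, Function.Injective (r v)) ∧
      ∀ v x y, r v x ≤ r v y → sat v x ≤ sat v y := by
  obtain ⟨n, ⟨e⟩⟩ := Finite.exists_equiv_fin V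
  refine ⟨fun v x => toLex (sat v x, (e x : ℕ)), ?_, ?_⟩
  · intro v x y hxy
    have := congrArg (fun p => (ofLex p).2) hxy
    exact e.injective (Fin.ext this)
  · intro v x y hxy
    rcases Prod.Lex.le_iff.mp hxy with h | h
    · exact h.le
    · exact h.1.le

/-- An agent whose whole unit of matching is with partners at least as good as `v` has utility at
least `sat u v`. -/
lemma le_util [Fintype V] {sat : V → V → ℚ} {M : V → V → ℝ} (hsat : ∀ u v, 0 ≤ sat u v)
    (hM : ∀ u v, 0 ≤ M u v) {u v : V} (h : 1 ≤ wge sat M u v) : (sat u v : ℝ) ≤ util sat M u := by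
  have hs : ∀ u v, (0 : ℝ) ≤ sat u v := fun u v => by exact_mod_cast hsat u v
  calc (sat u v : ℝ) ≤ sat u v * wge sat M u v := le_mul_of_one_le_right (hs u v) h
    _ = ∑ z ∈ univ.filter (fun z => Adj sat u z ∧ sat u v ≤ sat u z), (sat u v : ℝ) * M u z := by
      rw [wge, mul_sum]
    _ ≤ ∑ z ∈ univ.filter (fun z => Adj sat u z ∧ sat u v ≤ sat u z), (sat u z : ℝ) * M u z := by
      refine sum_le_sum fun z hz => mul_le_mul_of_nonneg_right ?_ (hM u z)
      exact_mod_cast (mem_filter.mp hz).2.2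
    _ ≤ util sat M u :=
      sum_le_sum_of_subset_of_nonneg (filter_subset _ _)
        fun z _ _ => mul_nonneg (hs u z) (hM u z)

/-- Every instance (possibly with ties) admits an ordinally stable (hence
also cardinally stable) half-integral fractional matching in which every matched agent
is fully matched. -/
theorem exists_halfIntegral_ordinallyStable_matching [Fintype V]
    (sat : V → V → ℚ) (hinst : IsInstance sat) :
    ∃ M : V → V → ℝ, IsMatching sat M ∧ OrdStable sat M ∧ CardStable sat M ∧
      (∀ u v, M u v = 0 ∨ M u v = 1/2 ∨ M u v = 1) ∧
      (∀ v, 0 < ∑ u, M v u → ∑ u, M v u = 1) := by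
  obtain ⟨r, hrinj, hrle⟩ := exists_strict_refinement sat
  obtain ⟨F, hFE, hFr, hFl, hFiff, hstab⟩ :=
    exists_stable_partition (Adj sat) (fun u v h => Or.symm h) r hrinj
  let M : V → V → ℝ := fun u v => ((if F u v then 1 else 0) + (if F v u then 1 else 0)) / 2
  -- An agent on the partition has weight one on any set containing both of its neighbours.
  have hsum : ∀ (S : Finset V) u a b, F u a → F b u → a ∈ S → b ∈ S → ∑ z ∈ S, M u z = 1 := by
    intro S u a b ha hb haS hbS
    have h1 : ∀ z, F u z ↔ a = z := fun z => ⟨fun h => hFr u a z ha h, fun h => h ▸ ha⟩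
    have h2 : ∀ z, F z u ↔ b = z := fun z => ⟨fun h => hFl u b z hb h, fun h => h ▸ hb⟩
    simp only [M, h1, h2]
    rw [← sum_div, sum_add_distrib, sum_ite_eq, sum_ite_eq, if_pos haS, if_pos hbS]
    norm_num
  have hzero : ∀ u, (¬ ∃ v, F u v) → ∑ z, M u z = 0 := by
    intro u hu
    have hu' : ¬ ∃ v, F v u := fun h => hu ((hFiff u).mpr h)
    push Not at hu hu'
    simp [M, hu, hu']
  have hdeg : ∀ u, ∑ z, M u z = 0 ∨ ∑ z, M u z = 1 := by
    intro u
    by_cases hu : ∃ v, F u v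
    · obtain ⟨b, hb⟩ := (hFiff u).mp hu
      obtain ⟨a, ha⟩ := hu
      exact Or.inr (hsum univ u a b ha hb (mem_univ _) (mem_univ _))
    · exact Or.inl (hzero u hu)
  have hnn : ∀ u v, 0 ≤ M u v := by
    intro u v
    simp only [M]
    split_ifs <;> norm_num
  have hone : ∀ u v, (∃ a b, F u a ∧ F b u ∧ r u v ≤ r u a ∧ r u v ≤ r u b) →
      wge sat M u v = 1 := by
    rintro u v ⟨a, b, ha, hb, hva, hvb⟩
    refine hsum _ u a b ha hb ?_ ?_
    · simpa using ⟨hFE _ _ ha, hrle _ _ _ hva⟩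
    · simpa using ⟨Or.symm (hFE _ _ hb), hrle _ _ _ hvb⟩
  have hedge : ∀ u v, Adj sat u v → wge sat M u v = 1 ∨ wge sat M v u = 1 :=
    fun u v h => (hstab u v h).imp (hone u v) (hone v u)
  refine ⟨M, ⟨?_, hnn, ?_, ?_⟩, ?_, ?_, ?_, ?_⟩
  · intro u v
    simp only [M, add_comm]
  · intro u v h
    have h1 : ¬ F u v := fun h' => h (hFE _ _ h')
    have h2 : ¬ F v u := fun h' => h (Or.symm (hFE _ _ h'))
    simp [M, h1, h2]
  · intro u
    rcases hdeg u with h | h <;> rw [h]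
    exact zero_le_one
  · rintro u v h ⟨h1, h2⟩
    rcases hedge u v h with h' | h'
    · exact absurd h' h1.ne
    · exact absurd h' h2.ne
  · rintro u v h ⟨h1, h2⟩
    rcases hedge u v h with h' | h'
    · exact absurd (le_util hinst.nonneg hnn h'.ge) (not_le.mpr h1)
    · exact absurd (le_util hinst.nonneg hnn h'.ge) (not_le.mpr h2)
  · intro u v
    simp only [M]
    split_ifs <;> norm_num
  · intro u hu
    rcases hdeg u with h | h
    · exact absurd h hu.ne'
    · exact h
end

section
/- Let G be a bipartite graph with parts U and W and strict cardinal preferences sat. If M₁ and M₂ are ordinally stable fractional matchings, then M₁ ∨ M₂ and M₁ ∧ M₂ are again ordinally stable fractional matchings; consequently, the set of all ordinally stable fractional matchings of (G, sat), partially ordered by weak U-domination ≽_U, forms a distributive lattice with join ∨ and meet ∧. -/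
/-!
For a stable matching `M` write `F(x, y) = M(x, ≽ y)`. Strictness of the preferences makes sums of
differences along one agent's preference list telescope (`sum_telescope`), so the join has
cumulative weights `max (F₁(x, y)) (F₂(x, y))` at every `x ∈ U`, and the meet has the corresponding
minima. The order-theoretic claims, including distributivity, are therefore pointwise facts about
`max` and `min` on `ℝ`. The substance is that join and meet are ordinally stable matchings.

*Tightness* (`tight`). Ordinal stability gives `F(u, w) + F(w, u) - M(u, w) ≥ 1` on each edge.
Weighting by `M` and summing, telescoping turns the left-hand side into `∑ d(v)²`, where
`d(v) ≤ 1` is the degree, while the right-hand side is `∑ d(v)`. Hence the inequality is an equality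
on every edge with `M(u, w) > 0`.

*Duality* (`join_eq_meet_compl`). Let `J` be the join computed from the maxima at the `U`-endpoint
and `K` the function computed from the minima at the endpoint outside `U`. Tightness yields `J ≤ K`
edge by edge. Summing over all edges gives `∑_{U} max d₁ d₂ ≤ ∑_{Uᶜ} min d₁ d₂`; together with
the same inequality for `Uᶜ` all these sums agree, so `J = K`. In other words the `U`-join is the
`Uᶜ`-meet.

Consequently the join has degree at most one on both sides. On an edge `{u, w}` with `u ∈ U`, its
cumulative weights are the maximum at `u` and the minimum at `w`; if the maximum at `u` is below
`1`, stability of both matchings forces both weights at `w` to be `1`, so the edge does not block.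
The meet is covered by exchanging `U` and `Uᶜ`.
-/

open Finset
open scoped Classical

variable {V : Type*}

/-- The join `M₁ ∨ M₂` of two fractional matchings of a bipartite graph with part `U`. -/
noncomputable def osmJoin [Fintype V] (sat : V → V → ℚ) (U : Set V)
    (M₁ M₂ : V → V → ℝ) : V → V → ℝ := fun a b =>
  if Adj sat a b then
    if a ∈ U then
      max (wge sat M₁ a b) (wge sat M₂ a b) - max (wgt sat M₁ a b) (wgt sat M₂ a b)
    else
      max (wge sat M₁ b a) (wge sat M₂ b a) - max (wgt sat M₁ b a) (wgt sat M₂ b a)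
  else 0

/-- The meet `M₁ ∧ M₂` of two fractional matchings of a bipartite graph with part `U`. -/
noncomputable def osmMeet [Fintype V] (sat : V → V → ℚ) (U : Set V)
    (M₁ M₂ : V → V → ℝ) : V → V → ℝ := fun a b =>
  if Adj sat a b then
    if a ∈ U then
      min (wge sat M₁ a b) (wge sat M₂ a b) - min (wgt sat M₁ a b) (wgt sat M₂ a b)
    else
      min (wge sat M₁ b a) (wge sat M₂ b a) - min (wgt sat M₁ b a) (wgt sat M₂ b a)
  else 0

/-- Weak `U`-domination: `M₁ ≽_U M₂`. -/
def DomU [Fintype V] (sat : V → V → ℚ) (U : Set V) (M₁ M₂ : V → V → ℝ) : Prop :=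
  ∀ x y, x ∈ U → Adj sat x y → wge sat M₂ x y ≤ wge sat M₁ x y

/-! ### Telescoping along a preference list -/

theorem adj_comm {sat : V → V → ℚ} {u v : V} : Adj sat u v ↔ Adj sat v u := or_comm

/-- The summands are the increments of `H` as the elements of `S` are added in decreasing order
of `r`. -/
theorem telescope (r : V → ℚ) (H : Finset V → ℝ) (S : Finset V) :
    (∀ a ∈ S, ∀ b ∈ S, a ≠ b → r a ≠ r b) →
    ∑ z ∈ S, (H (S.filter (fun y => r z ≤ r y)) - H (S.filter (fun y => r z < r y)))
      = H S - H ∅ := by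
  induction S using Finset.induction_on_min_value r with
  | empty => simp
  | insert a s ha hmin ih =>
    intro hinj
    have hlt : ∀ x ∈ s, r a < r x := fun x hx =>
      lt_of_le_of_ne (hmin x hx) (hinj a (mem_insert_self a s) x (mem_insert_of_mem hx)
        (fun h => ha (h ▸ hx)))
    have ih' := ih (fun x hx y hy => hinj x (mem_insert_of_mem hx) y (mem_insert_of_mem hy))
    rw [sum_insert ha]
    have h1 : (insert a s).filter (fun y => r a ≤ r y) = insert a s := by
      apply filter_true_of_mem
      intro x hx
      rcases mem_insert.1 hx with rfl | hx
      · exact le_rfl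
      · exact hmin x hx
    have h2 : (insert a s).filter (fun y => r a < r y) = s := by
      ext y
      simp only [mem_filter, mem_insert]
      constructor
      · rintro ⟨rfl | h, h'⟩
        · exact absurd h' (lt_irrefl _)
        · exact h
      · exact fun h => ⟨Or.inr h, hlt y h⟩
    have h3 : ∑ z ∈ s, (H ((insert a s).filter (fun y => r z ≤ r y))
        - H ((insert a s).filter (fun y => r z < r y))) = H s - H ∅ := by
      rw [← ih']
      refine sum_congr rfl fun z hz => ?_
      rw [filter_insert, filter_insert, if_neg (not_le.2 (hlt z hz)),
        if_neg (not_lt.2 (hlt z hz).le)]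
    rw [h1, h2, h3]
    ring

/-- Telescoping for a function `h` of the cumulative weights of two matchings at `x`, over a set
`S` of neighbours of `x` that is closed under passing to better neighbours. -/
theorem sum_telescope [Fintype V] {sat : V → V → ℚ} (hstrict : StrictPrefs sat)
    (M₁ M₂ : V → V → ℝ) (x : V) (h : ℝ → ℝ → ℝ) (h0 : h 0 0 = 0) (S : Finset V)
    (hS : ∀ z ∈ S, Adj sat x z)
    (hup : ∀ z ∈ S, ∀ z', Adj sat x z' → sat x z ≤ sat x z' → z' ∈ S) :
    ∑ z ∈ S, (h (wge sat M₁ x z) (wge sat M₂ x z) - h (wgt sat M₁ x z) (wgt sat M₂ x z))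
      = h (∑ z ∈ S, M₁ x z) (∑ z ∈ S, M₂ x z) := by
  have key := telescope (sat x) (fun T => h (∑ z ∈ T, M₁ x z) (∑ z ∈ T, M₂ x z)) S
    (fun a ha b hb hab => hstrict x a b (hS a ha) (hS b hb) hab)
  simp only [sum_empty, h0, sub_zero] at key
  rw [← key]
  refine sum_congr rfl fun z hz => ?_
  have e1 : S.filter (fun y => sat x z ≤ sat x y)
      = univ.filter (fun y => Adj sat x y ∧ sat x z ≤ sat x y) := by
    ext y
    simp only [mem_filter, mem_univ, true_and]
    exact ⟨fun hy => ⟨hS y hy.1, hy.2⟩, fun hy => ⟨hup z hz y hy.1 hy.2, hy.2⟩⟩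
  have e2 : S.filter (fun y => sat x z < sat x y)
      = univ.filter (fun y => Adj sat x y ∧ sat x z < sat x y) := by
    ext y
    simp only [mem_filter, mem_univ, true_and]
    exact ⟨fun hy => ⟨hS y hy.1, hy.2⟩, fun hy => ⟨hup z hz y hy.1 hy.2.le, hy.2⟩⟩
  simp only [e1, e2, wge, wgt]

theorem sum_telescope_ge [Fintype V] {sat : V → V → ℚ} (hstrict : StrictPrefs sat)
    (M₁ M₂ : V → V → ℝ) (x y : V) (h : ℝ → ℝ → ℝ) (h0 : h 0 0 = 0) :
    ∑ z ∈ univ.filter (fun z => Adj sat x z ∧ sat x y ≤ sat x z),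
      (h (wge sat M₁ x z) (wge sat M₂ x z) - h (wgt sat M₁ x z) (wgt sat M₂ x z))
      = h (wge sat M₁ x y) (wge sat M₂ x y) := by
  apply sum_telescope hstrict M₁ M₂ x h h0
  · intro z hz
    exact (mem_filter.1 hz).2.1
  · intro z hz z' ha hle
    simp only [mem_filter, mem_univ, true_and] at hz ⊢
    exact ⟨ha, hz.2.trans hle⟩

theorem sum_eq_sum_adj [Fintype V] {sat : V → V → ℚ} {f : V → ℝ} {x : V}
    (hf : ∀ z, ¬ Adj sat x z → f z = 0) :
    ∑ z, f z = ∑ z ∈ univ.filter (fun z => Adj sat x z), f z := by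
  symm
  apply sum_subset (subset_univ _)
  intro z _ hz
  exact hf z (by simpa using hz)

theorem sum_telescope_univ [Fintype V] {sat : V → V → ℚ} (hstrict : StrictPrefs sat)
    {M₁ M₂ : V → V → ℝ} (h₁ : IsMatching sat M₁) (h₂ : IsMatching sat M₂)
    (x : V) (h : ℝ → ℝ → ℝ) (h0 : h 0 0 = 0) :
    ∑ z ∈ univ.filter (fun z => Adj sat x z),
      (h (wge sat M₁ x z) (wge sat M₂ x z) - h (wgt sat M₁ x z) (wgt sat M₂ x z))
      = h (∑ z, M₁ x z) (∑ z, M₂ x z) := by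
  rw [sum_eq_sum_adj (h₁.support x), sum_eq_sum_adj (h₂.support x)]
  apply sum_telescope hstrict M₁ M₂ x h h0
  · intro z hz
    exact (mem_filter.1 hz).2
  · intro z _ z' ha _
    simpa using ha

theorem wge_eq_add [Fintype V] {sat : V → V → ℚ} (hstrict : StrictPrefs sat)
    (M : V → V → ℝ) {x y : V} (hxy : Adj sat x y) :
    wge sat M x y = M x y + wgt sat M x y := by
  unfold wge wgt
  have hy : y ∉ univ.filter (fun z => Adj sat x z ∧ sat x y < sat x z) := by simp
  rw [← sum_insert hy]
  congr 1
  ext z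
  simp only [mem_filter, mem_univ, true_and, mem_insert]
  constructor
  · rintro ⟨ha, hle⟩
    by_cases hzy : z = y
    · exact Or.inl hzy
    · exact Or.inr ⟨ha, lt_of_le_of_ne hle (hstrict x y z hxy ha (Ne.symm hzy))⟩
  · rintro (rfl | ⟨ha, hlt⟩)
    · exact ⟨hxy, le_rfl⟩
    · exact ⟨ha, hlt.le⟩

/-! ### Tightness of the stability inequality on the support -/

theorem stable_ineq [Fintype V] {sat : V → V → ℚ} (hstrict : StrictPrefs sat)
    {M : V → V → ℝ} (hM : IsMatching sat M) (hs : OrdStable sat M) {x y : V}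
    (hxy : Adj sat x y) : 1 ≤ wge sat M x y + wgt sat M y x := by
  have hyx := adj_comm.1 hxy
  have hx := wge_eq_add hstrict M hxy
  have hy := wge_eq_add hstrict M hyx
  have hsy := hM.symm x y
  have n1 : 0 ≤ wgt sat M x y := sum_nonneg fun z _ => hM.nonneg x z
  have n2 : 0 ≤ wgt sat M y x := sum_nonneg fun z _ => hM.nonneg y z
  by_contra hlt
  push Not at hlt
  exact hs x y hxy ⟨by linarith, by linarith⟩

theorem sum_sq [Fintype V] {sat : V → V → ℚ} (hstrict : StrictPrefs sat)
    {M : V → V → ℝ} (hM : IsMatching sat M) (x : V) :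
    ∑ y, M x y * (wge sat M x y + wgt sat M x y) = (∑ y, M x y) ^ 2 := by
  rw [sum_eq_sum_adj (sat := sat) (x := x) (f := fun y => M x y * (wge sat M x y + wgt sat M x y))
    (fun z hz => by simp [hM.support x z hz])]
  rw [← sum_telescope_univ hstrict hM hM x (fun a _ => a ^ 2) (by simp)]
  refine sum_congr rfl fun y hy => ?_
  have := wge_eq_add hstrict M (mem_filter.1 hy).2
  simp only [this]
  ring

/-- On the support of a stable matching the stability inequality `stable_ineq` is an equality. -/
theorem tight [Fintype V] {sat : V → V → ℚ} (hstrict : StrictPrefs sat)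
    {M : V → V → ℝ} (hM : IsMatching sat M) (hs : OrdStable sat M) (x y : V)
    (hxy : M x y ≠ 0) : wge sat M x y + wgt sat M y x = 1 := by
  have hnn : ∀ a b, 0 ≤ M a b * (wge sat M a b + wgt sat M b a - 1) := by
    intro a b
    by_cases hab : Adj sat a b
    · exact mul_nonneg (hM.nonneg a b) (by linarith [stable_ineq hstrict hM hs hab])
    · simp [hM.support a b hab]
  have hswap : ∑ a, ∑ b, M a b * wgt sat M b a = ∑ a, ∑ b, M a b * wgt sat M a b := by
    rw [sum_comm]
    exact sum_congr rfl fun a _ => sum_congr rfl fun b _ => by rw [hM.symm]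
  have htotal : ∑ a, ∑ b, M a b * (wge sat M a b + wgt sat M b a - 1)
      = ∑ a, ((∑ b, M a b) ^ 2 - ∑ b, M a b) := by
    have e : ∑ a, (∑ b, M a b) ^ 2
        = ∑ a, ∑ b, M a b * wge sat M a b + ∑ a, ∑ b, M a b * wgt sat M a b := by
      simp only [← sum_sq hstrict hM, mul_add, sum_add_distrib]
    simp only [mul_sub, mul_add, sum_sub_distrib, sum_add_distrib, mul_one]
    rw [hswap, e]
  have hle : ∑ a, ((∑ b, M a b) ^ 2 - ∑ b, M a b) ≤ 0 := by
    apply sum_nonpos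
    intro a _
    have h1 := hM.degree_le_one a
    have h0 : 0 ≤ ∑ b, M a b := sum_nonneg fun b _ => hM.nonneg a b
    nlinarith
  have hz : ∑ a, ∑ b, M a b * (wge sat M a b + wgt sat M b a - 1) = 0 :=
    le_antisymm (htotal.trans_le hle) (sum_nonneg fun a _ => sum_nonneg fun b _ => hnn a b)
  have hz1 := (sum_eq_zero_iff_of_nonneg
    (fun a _ => sum_nonneg fun b _ => hnn a b)).1 hz x (mem_univ x)
  have hz2 := (sum_eq_zero_iff_of_nonneg (fun b _ => hnn x b)).1 hz1 y (mem_univ y)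
  rcases mul_eq_zero.1 hz2 with h | h
  · exact absurd h hxy
  · linarith

/-! ### Cumulative weights of join and meet -/

theorem wge_join [Fintype V] {sat : V → V → ℚ} (hstrict : StrictPrefs sat) {U : Set V}
    (M₁ M₂ : V → V → ℝ) {x : V} (hx : x ∈ U) (y : V) :
    wge sat (osmJoin sat U M₁ M₂) x y = max (wge sat M₁ x y) (wge sat M₂ x y) := by
  rw [← sum_telescope_ge hstrict M₁ M₂ x y max (by simp)]
  refine sum_congr rfl fun z hz => ?_
  simp [osmJoin, (mem_filter.1 hz).2.1, hx]

theorem wge_meet [Fintype V] {sat : V → V → ℚ} (hstrict : StrictPrefs sat) {U : Set V}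
    (M₁ M₂ : V → V → ℝ) {x : V} (hx : x ∈ U) (y : V) :
    wge sat (osmMeet sat U M₁ M₂) x y = min (wge sat M₁ x y) (wge sat M₂ x y) := by
  rw [← sum_telescope_ge hstrict M₁ M₂ x y min (by simp)]
  refine sum_congr rfl fun z hz => ?_
  simp [osmMeet, (mem_filter.1 hz).2.1, hx]

theorem join_support [Fintype V] {sat : V → V → ℚ} {U : Set V} (M₁ M₂ : V → V → ℝ) (a b : V)
    (h : ¬ Adj sat a b) : osmJoin sat U M₁ M₂ a b = 0 := by
  simp [osmJoin, h]

theorem meet_support [Fintype V] {sat : V → V → ℚ} {U : Set V} (M₁ M₂ : V → V → ℝ) (a b : V)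
    (h : ¬ Adj sat a b) : osmMeet sat U M₁ M₂ a b = 0 := by
  simp [osmMeet, h]

theorem deg_join [Fintype V] {sat : V → V → ℚ} (hstrict : StrictPrefs sat) {U : Set V}
    {M₁ M₂ : V → V → ℝ} (h₁ : IsMatching sat M₁) (h₂ : IsMatching sat M₂) {x : V} (hx : x ∈ U) :
    ∑ y, osmJoin sat U M₁ M₂ x y = max (∑ y, M₁ x y) (∑ y, M₂ x y) := by
  rw [← sum_telescope_univ hstrict h₁ h₂ x max (by simp),
    sum_eq_sum_adj (join_support M₁ M₂ x)]
  refine sum_congr rfl fun z hz => ?_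
  simp [osmJoin, (mem_filter.1 hz).2, hx]

theorem deg_meet [Fintype V] {sat : V → V → ℚ} (hstrict : StrictPrefs sat) {U : Set V}
    {M₁ M₂ : V → V → ℝ} (h₁ : IsMatching sat M₁) (h₂ : IsMatching sat M₂) {x : V} (hx : x ∈ U) :
    ∑ y, osmMeet sat U M₁ M₂ x y = min (∑ y, M₁ x y) (∑ y, M₂ x y) := by
  rw [← sum_telescope_univ hstrict h₁ h₂ x min (by simp),
    sum_eq_sum_adj (meet_support M₁ M₂ x)]
  refine sum_congr rfl fun z hz => ?_
  simp [osmMeet, (mem_filter.1 hz).2, hx]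

theorem join_symm [Fintype V] {sat : V → V → ℚ} {U : Set V} (hbip : BipartiteWith sat U)
    (M₁ M₂ : V → V → ℝ) (a b : V) :
    osmJoin sat U M₁ M₂ a b = osmJoin sat U M₁ M₂ b a := by
  by_cases hab : Adj sat a b
  · have hba := adj_comm.1 hab
    have := hbip a b hab
    by_cases ha : a ∈ U
    · have hb := this.1 ha
      simp [osmJoin, hab, hba, ha, hb]
    · have hb : b ∈ U := by
        by_contra hb
        exact ha (this.2 hb)
      simp [osmJoin, hab, hba, ha, hb]
  · rw [join_support _ _ _ _ hab, join_support _ _ _ _ (fun h => hab (adj_comm.1 h))]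

theorem meet_symm [Fintype V] {sat : V → V → ℚ} {U : Set V} (hbip : BipartiteWith sat U)
    (M₁ M₂ : V → V → ℝ) (a b : V) :
    osmMeet sat U M₁ M₂ a b = osmMeet sat U M₁ M₂ b a := by
  by_cases hab : Adj sat a b
  · have hba := adj_comm.1 hab
    have := hbip a b hab
    by_cases ha : a ∈ U
    · have hb := this.1 ha
      simp [osmMeet, hab, hba, ha, hb]
    · have hb : b ∈ U := by
        by_contra hb
        exact ha (this.2 hb)
      simp [osmMeet, hab, hba, ha, hb]
  · rw [meet_support _ _ _ _ hab, meet_support _ _ _ _ (fun h => hab (adj_comm.1 h))]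

theorem bip_compl {sat : V → V → ℚ} {U : Set V} (hbip : BipartiteWith sat U) :
    BipartiteWith sat Uᶜ := by
  intro u v huv
  have := hbip u v huv
  simp only [Set.mem_compl_iff]
  tauto

/-! ### The `U`-join is the `Uᶜ`-meet -/

/-- Edgewise comparison of the `U`-join with the `Uᶜ`-meet. In the applications `aᵢ, aᵢ'` are the
weak and strict cumulative weights at `u ∈ U`, `bᵢ, bᵢ'` those at `w`, and `mᵢ` is the weight of
the edge. -/
theorem edge_ineq {a₁ a₁' b₁ b₁' a₂ a₂' b₂ b₂' m₁ m₂ : ℝ}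
    (ha₁ : a₁ = m₁ + a₁') (hb₁ : b₁ = m₁ + b₁') (ha₂ : a₂ = m₂ + a₂') (hb₂ : b₂ = m₂ + b₂')
    (hm₁ : 0 ≤ m₁) (hm₂ : 0 ≤ m₂) (h₁ : 1 ≤ a₁ + b₁') (h₂ : 1 ≤ a₂ + b₂')
    (t₁ : m₁ ≠ 0 → a₁ + b₁' = 1) (t₂ : m₂ ≠ 0 → a₂ + b₂' = 1) :
    max a₁ a₂ - max a₁' a₂' ≤ min b₁ b₂ - min b₁' b₂' := by
  subst ha₁ hb₁ ha₂ hb₂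
  by_cases z₁ : m₁ = 0 <;> by_cases z₂ : m₂ = 0
  · subst z₁ z₂
    simp
  · have := t₂ z₂
    subst z₁
    rcases max_cases (0 + a₁') (m₂ + a₂') with h | h <;>
    rcases max_cases a₁' a₂' with h' | h' <;>
    rcases min_cases (0 + b₁') (m₂ + b₂') with h'' | h'' <;>
    rcases min_cases b₁' b₂' with h''' | h''' <;> linarith
  · have := t₁ z₁
    subst z₂
    rcases max_cases (m₁ + a₁') (0 + a₂') with h | h <;>
    rcases max_cases a₁' a₂' with h' | h' <;>
    rcases min_cases (m₁ + b₁') (0 + b₂') with h'' | h'' <;>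
    rcases min_cases b₁' b₂' with h''' | h''' <;> linarith
  · have e₁ := t₁ z₁
    have e₂ := t₂ z₂
    rcases max_cases (m₁ + a₁') (m₂ + a₂') with h | h <;>
    rcases max_cases a₁' a₂' with h' | h' <;>
    rcases min_cases (m₁ + b₁') (m₂ + b₂') with h'' | h'' <;>
    rcases min_cases b₁' b₂' with h''' | h''' <;> linarith

theorem join_le_meet_compl [Fintype V] {sat : V → V → ℚ} (hstrict : StrictPrefs sat) {U : Set V}
    (hbip : BipartiteWith sat U) {M₁ M₂ : V → V → ℝ}
    (h₁ : IsMatching sat M₁) (h₂ : IsMatching sat M₂) (s₁ : OrdStable sat M₁)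
    (s₂ : OrdStable sat M₂) (a b : V) :
    osmJoin sat U M₁ M₂ a b ≤ osmMeet sat Uᶜ M₁ M₂ a b := by
  have main : ∀ a b, a ∈ U → osmJoin sat U M₁ M₂ a b ≤ osmMeet sat Uᶜ M₁ M₂ a b := by
    intro a b ha
    by_cases hab : Adj sat a b
    · have hba := adj_comm.1 hab
      have q₁ := wge_eq_add hstrict M₁ hba
      have q₂ := wge_eq_add hstrict M₂ hba
      rw [h₁.symm b a] at q₁
      rw [h₂.symm b a] at q₂
      have := edge_ineq (wge_eq_add hstrict M₁ hab) q₁ (wge_eq_add hstrict M₂ hab) q₂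
        (h₁.nonneg a b) (h₂.nonneg a b) (stable_ineq hstrict h₁ s₁ hab)
        (stable_ineq hstrict h₂ s₂ hab) (tight hstrict h₁ s₁ a b) (tight hstrict h₂ s₂ a b)
      simpa [osmJoin, osmMeet, hab, ha] using this
    · rw [join_support _ _ _ _ hab, meet_support _ _ _ _ hab]
  by_cases ha : a ∈ U
  · exact main a b ha
  · by_cases hab : Adj sat a b
    · have hb : b ∈ U := by
        by_contra hb
        exact ha ((hbip a b hab).2 hb)
      rw [join_symm hbip, meet_symm (bip_compl hbip)]
      exact main b a hb
    · rw [join_support _ _ _ _ hab, meet_support _ _ _ _ hab]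

/-- Double counting: the total weight can be collected at either side of the bipartition. -/
theorem sum_side [Fintype V] {sat : V → V → ℚ} {U : Set V} (hbip : BipartiteWith sat U)
    {N : V → V → ℝ} (hsymm : ∀ a b, N a b = N b a) (hsupp : ∀ a b, ¬ Adj sat a b → N a b = 0) :
    ∑ a ∈ univ.filter (fun a => a ∈ U), ∑ b, N a b
      = ∑ a ∈ univ.filter (fun a => a ∈ Uᶜ), ∑ b, N a b := by
  rw [sum_filter, sum_filter]
  have e : ∀ (P : V → Prop) [DecidablePred P], ∑ a, (if P a then ∑ b, N a b else 0)
      = ∑ a, ∑ b, if P a then N a b else 0 := by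
    intro P _
    refine sum_congr rfl fun a _ => ?_
    split_ifs <;> simp
  rw [e, e, sum_comm]
  refine sum_congr rfl fun a _ => sum_congr rfl fun b _ => ?_
  by_cases hab : Adj sat a b
  · have := hbip a b hab
    have hiff : b ∈ U ↔ a ∈ Uᶜ := by
      simp only [Set.mem_compl_iff]
      tauto
    simp only [hiff, hsymm b a]
  · rw [hsymm b a, hsupp a b hab]
    simp

theorem side_ineq [Fintype V] {sat : V → V → ℚ} (hstrict : StrictPrefs sat) {U : Set V}
    (hbip : BipartiteWith sat U) {M₁ M₂ : V → V → ℝ}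
    (h₁ : IsMatching sat M₁) (h₂ : IsMatching sat M₂) (s₁ : OrdStable sat M₁)
    (s₂ : OrdStable sat M₂) :
    ∑ a ∈ univ.filter (fun a => a ∈ U), max (∑ b, M₁ a b) (∑ b, M₂ a b)
      ≤ ∑ a ∈ univ.filter (fun a => a ∈ Uᶜ), min (∑ b, M₁ a b) (∑ b, M₂ a b) := by
  calc _ = ∑ a ∈ univ.filter (fun a => a ∈ U), ∑ b, osmJoin sat U M₁ M₂ a b :=
        sum_congr rfl fun a ha => (deg_join hstrict h₁ h₂ (mem_filter.1 ha).2).symm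
    _ ≤ ∑ a ∈ univ.filter (fun a => a ∈ U), ∑ b, osmMeet sat Uᶜ M₁ M₂ a b :=
        sum_le_sum fun a _ => sum_le_sum fun b _ =>
          join_le_meet_compl hstrict hbip h₁ h₂ s₁ s₂ a b
    _ = ∑ a ∈ univ.filter (fun a => a ∈ Uᶜ), ∑ b, osmMeet sat Uᶜ M₁ M₂ a b :=
        sum_side hbip (meet_symm (bip_compl hbip) M₁ M₂) (meet_support M₁ M₂)
    _ = _ := sum_congr rfl fun a ha => deg_meet hstrict h₁ h₂ (mem_filter.1 ha).2

/-- Opposition of interests: taking the better shares at the `U`-endpoints is the same as taking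
the worse shares at the other endpoints. -/
theorem join_eq_meet_compl [Fintype V] {sat : V → V → ℚ} (hstrict : StrictPrefs sat) {U : Set V}
    (hbip : BipartiteWith sat U) {M₁ M₂ : V → V → ℝ}
    (h₁ : IsMatching sat M₁) (h₂ : IsMatching sat M₂) (s₁ : OrdStable sat M₁)
    (s₂ : OrdStable sat M₂) :
    osmJoin sat U M₁ M₂ = osmMeet sat Uᶜ M₁ M₂ := by
  have hle := join_le_meet_compl hstrict hbip h₁ h₂ s₁ s₂
  have i₂ := side_ineq hstrict (bip_compl hbip) h₁ h₂ s₁ s₂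
  simp only [compl_compl] at i₂
  have mm : ∀ S : Finset V, ∑ a ∈ S, min (∑ b, M₁ a b) (∑ b, M₂ a b)
      ≤ ∑ a ∈ S, max (∑ b, M₁ a b) (∑ b, M₂ a b) :=
    fun S => sum_le_sum fun a _ => min_le_max
  have hU : ∑ a ∈ univ.filter (fun a => a ∈ U), ∑ b, osmJoin sat U M₁ M₂ a b
      = ∑ a ∈ univ.filter (fun a => a ∈ U), max (∑ b, M₁ a b) (∑ b, M₂ a b) :=
    sum_congr rfl fun a ha => deg_join hstrict h₁ h₂ (mem_filter.1 ha).2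
  have hW : ∑ a ∈ univ.filter (fun a => a ∈ Uᶜ), ∑ b, osmMeet sat Uᶜ M₁ M₂ a b
      = ∑ a ∈ univ.filter (fun a => a ∈ Uᶜ), min (∑ b, M₁ a b) (∑ b, M₂ a b) :=
    sum_congr rfl fun a ha => deg_meet hstrict h₁ h₂ (mem_filter.1 ha).2
  have hside := sum_side hbip (meet_symm (bip_compl hbip) M₁ M₂) (meet_support M₁ M₂)
  have heq : ∑ a ∈ univ.filter (fun a => a ∈ U), ∑ b, osmJoin sat U M₁ M₂ a b
      = ∑ a ∈ univ.filter (fun a => a ∈ U), ∑ b, osmMeet sat Uᶜ M₁ M₂ a b := by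
    apply le_antisymm (sum_le_sum fun a _ => sum_le_sum fun b _ => hle a b)
    rw [hside, hU, hW]
    refine (mm _).trans (le_trans ?_ (mm _))
    -- `convert` because the two filters over `Uᶜ` carry different decidability instances
    convert i₂
    rfl
  have main : ∀ a b, a ∈ U → osmJoin sat U M₁ M₂ a b = osmMeet sat Uᶜ M₁ M₂ a b := by
    intro a b ha
    have r := (sum_eq_sum_iff_of_le (fun a _ => sum_le_sum fun b _ => hle a b)).1 heq a
      (by simpa using ha)
    exact (sum_eq_sum_iff_of_le (fun b _ => hle a b)).1 r b (mem_univ b)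
  funext a b
  by_cases ha : a ∈ U
  · exact main a b ha
  · by_cases hab : Adj sat a b
    · have hb : b ∈ U := by
        by_contra hb
        exact ha ((hbip a b hab).2 hb)
      rw [join_symm hbip, meet_symm (bip_compl hbip)]
      exact main b a hb
    · rw [join_support _ _ _ _ hab, meet_support _ _ _ _ hab]

/-! ### Closure under join and meet -/

theorem join_nonneg [Fintype V] {sat : V → V → ℚ} (hstrict : StrictPrefs sat) {U : Set V}
    {M₁ M₂ : V → V → ℝ} (h₁ : IsMatching sat M₁) (h₂ : IsMatching sat M₂) (a b : V) :
    0 ≤ osmJoin sat U M₁ M₂ a b := by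
  have key : ∀ a b, Adj sat a b → 0 ≤ max (wge sat M₁ a b) (wge sat M₂ a b)
      - max (wgt sat M₁ a b) (wgt sat M₂ a b) := by
    intro a b hab
    have e₁ := wge_eq_add hstrict M₁ hab
    have e₂ := wge_eq_add hstrict M₂ hab
    have n₁ := h₁.nonneg a b
    have n₂ := h₂.nonneg a b
    exact sub_nonneg.2 (max_le_max (by linarith) (by linarith))
  unfold osmJoin
  split_ifs with hab
  · exact key a b hab
  · exact key b a (adj_comm.1 hab)
  · exact le_rfl

theorem join_matching [Fintype V] {sat : V → V → ℚ} (hstrict : StrictPrefs sat) {U : Set V}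
    (hbip : BipartiteWith sat U) {M₁ M₂ : V → V → ℝ}
    (h₁ : IsMatching sat M₁) (h₂ : IsMatching sat M₂) (s₁ : OrdStable sat M₁)
    (s₂ : OrdStable sat M₂) : IsMatching sat (osmJoin sat U M₁ M₂) where
  symm := join_symm hbip M₁ M₂
  nonneg := join_nonneg hstrict h₁ h₂
  support := join_support M₁ M₂
  degree_le_one := by
    intro v
    by_cases hv : v ∈ U
    · rw [deg_join hstrict h₁ h₂ hv]
      exact max_le (h₁.degree_le_one v) (h₂.degree_le_one v)
    · rw [join_eq_meet_compl hstrict hbip h₁ h₂ s₁ s₂,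
        deg_meet hstrict h₁ h₂ (U := Uᶜ) hv]
      exact (min_le_left _ _).trans (h₁.degree_le_one v)

theorem join_stable [Fintype V] {sat : V → V → ℚ} (hstrict : StrictPrefs sat) {U : Set V}
    (hbip : BipartiteWith sat U) {M₁ M₂ : V → V → ℝ}
    (h₁ : IsMatching sat M₁) (h₂ : IsMatching sat M₂) (s₁ : OrdStable sat M₁)
    (s₂ : OrdStable sat M₂) : OrdStable sat (osmJoin sat U M₁ M₂) := by
  have main : ∀ u w, Adj sat u w → u ∈ U → ¬ (wge sat (osmJoin sat U M₁ M₂) u w < 1 ∧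
      wge sat (osmJoin sat U M₁ M₂) w u < 1) := by
    rintro u w huw hu ⟨hlt, hlt'⟩
    have hw : w ∈ Uᶜ := (hbip u w huw).1 hu
    rw [wge_join hstrict M₁ M₂ hu, max_lt_iff] at hlt
    rw [join_eq_meet_compl hstrict hbip h₁ h₂ s₁ s₂, wge_meet hstrict M₁ M₂ hw,
      min_lt_iff] at hlt'
    rcases hlt' with h | h
    · exact s₁ u w huw ⟨hlt.1, h⟩
    · exact s₂ u w huw ⟨hlt.2, h⟩
  intro u v huv
  by_cases hu : u ∈ U
  · exact main u v huv hu
  · have hv : v ∈ U := by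
      by_contra hv
      exact hu ((hbip u v huv).2 hv)
    exact fun h => main v u (adj_comm.1 huv) hv h.symm

theorem meet_eq_join_compl [Fintype V] {sat : V → V → ℚ} (hstrict : StrictPrefs sat) {U : Set V}
    (hbip : BipartiteWith sat U) {M₁ M₂ : V → V → ℝ}
    (h₁ : IsMatching sat M₁) (h₂ : IsMatching sat M₂) (s₁ : OrdStable sat M₁)
    (s₂ : OrdStable sat M₂) :
    osmMeet sat U M₁ M₂ = osmJoin sat Uᶜ M₁ M₂ := by
  rw [join_eq_meet_compl hstrict (bip_compl hbip) h₁ h₂ s₁ s₂, compl_compl]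

/-- for bipartite instances with strict preferences, the ordinally stable
fractional matchings are closed under join and meet; the join is a least upper bound and
the meet a greatest lower bound with respect to `≽_U`, and the distributive law holds
(up to mutual `≽_U`-domination), so the ordinally stable matchings form a distributive
lattice under `≽_U` with join `∨` and meet `∧`. -/
theorem ordinallyStable_distributive_lattice [Fintype V]
    (sat : V → V → ℚ) (U : Set V)
    (hinst : IsInstance sat) (hstrict : StrictPrefs sat) (hbip : BipartiteWith sat U) :
    (∀ M₁ M₂ : V → V → ℝ,
      IsMatching sat M₁ → IsMatching sat M₂ → OrdStable sat M₁ → OrdStable sat M₂ →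
      -- closure under join and meet:
      (IsMatching sat (osmJoin sat U M₁ M₂) ∧ OrdStable sat (osmJoin sat U M₁ M₂)) ∧
      (IsMatching sat (osmMeet sat U M₁ M₂) ∧ OrdStable sat (osmMeet sat U M₁ M₂)) ∧
      -- the join is a least upper bound w.r.t. `≽_U`:
      (DomU sat U (osmJoin sat U M₁ M₂) M₁ ∧ DomU sat U (osmJoin sat U M₁ M₂) M₂ ∧
        ∀ N : V → V → ℝ, IsMatching sat N → OrdStable sat N →
          DomU sat U N M₁ → DomU sat U N M₂ → DomU sat U N (osmJoin sat U M₁ M₂)) ∧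
      -- the meet is a greatest lower bound w.r.t. `≽_U`:
      (DomU sat U M₁ (osmMeet sat U M₁ M₂) ∧ DomU sat U M₂ (osmMeet sat U M₁ M₂) ∧
        ∀ N : V → V → ℝ, IsMatching sat N → OrdStable sat N →
          DomU sat U M₁ N → DomU sat U M₂ N → DomU sat U (osmMeet sat U M₁ M₂) N)) ∧
    -- distributivity (up to `≽_U`-equivalence):
    (∀ M₁ M₂ M₃ : V → V → ℝ,
      IsMatching sat M₁ → IsMatching sat M₂ → IsMatching sat M₃ →
      OrdStable sat M₁ → OrdStable sat M₂ → OrdStable sat M₃ →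
      DomU sat U (osmMeet sat U M₁ (osmJoin sat U M₂ M₃))
        (osmJoin sat U (osmMeet sat U M₁ M₂) (osmMeet sat U M₁ M₃)) ∧
      DomU sat U (osmJoin sat U (osmMeet sat U M₁ M₂) (osmMeet sat U M₁ M₃))
        (osmMeet sat U M₁ (osmJoin sat U M₂ M₃))) := by
  refine ⟨fun M₁ M₂ h₁ h₂ s₁ s₂ => ⟨⟨join_matching hstrict hbip h₁ h₂ s₁ s₂,
    join_stable hstrict hbip h₁ h₂ s₁ s₂⟩, ?_, ⟨?_, ?_, ?_⟩, ⟨?_, ?_, ?_⟩⟩,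
    fun M₁ M₂ M₃ _ _ _ _ _ _ => ⟨?_, ?_⟩⟩
  · rw [meet_eq_join_compl hstrict hbip h₁ h₂ s₁ s₂]
    exact ⟨join_matching hstrict (bip_compl hbip) h₁ h₂ s₁ s₂,
      join_stable hstrict (bip_compl hbip) h₁ h₂ s₁ s₂⟩
  · intro x y hx _
    rw [wge_join hstrict M₁ M₂ hx]
    exact le_max_left _ _
  · intro x y hx _
    rw [wge_join hstrict M₁ M₂ hx]
    exact le_max_right _ _
  · intro N _ _ d₁ d₂ x y hx hxy
    rw [wge_join hstrict M₁ M₂ hx]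
    exact max_le (d₁ x y hx hxy) (d₂ x y hx hxy)
  · intro x y hx _
    rw [wge_meet hstrict M₁ M₂ hx]
    exact min_le_left _ _
  · intro x y hx _
    rw [wge_meet hstrict M₁ M₂ hx]
    exact min_le_right _ _
  · intro N _ _ d₁ d₂ x y hx hxy
    rw [wge_meet hstrict M₁ M₂ hx]
    exact le_min (d₁ x y hx hxy) (d₂ x y hx hxy)
  · intro x y hx _
    simp only [wge_meet hstrict _ _ hx, wge_join hstrict _ _ hx]
    rw [min_max_distrib_left]
  · intro x y hx _
    simp only [wge_meet hstrict _ _ hx, wge_join hstrict _ _ hx]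
    rw [min_max_distrib_left]
end

section
/- Let G be a graph with strict cardinal preferences sat. If M₁, M₂, M₃ are ordinally stable fractional matchings of (G, sat), then the median matching med(M₁, M₂, M₃) is a well-defined fractional matching of G and is ordinally stable. -/
/-!
Write `m(x, ≽ y)` and `m(x, ≻ y)` for `wge` and `wgt`.  Under strict preferences ordinal
stability of `N` gives the linear inequality `N(u, ≽ v) + N(v, ≻ u) ≥ 1` on every edge
(`one_le_wge_add_wgt`).

The heart of the proof is complementary slackness (`wge_add_wgt_eq_one`): if `M` and `N` are
stable and `M u v > 0`, then `N(u, ≽ v) + N(v, ≻ u) = 1`.  To see this, weight the inequality for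
`N` by `M`, the one for `M` by `N`, and sum over all ordered pairs.  Each ordered pair of partners
`(v, w)` of a vertex `u` is compared in exactly one of `v ≼ w`, `w ≺ v`, so the contribution of
`u` to the total is `2 m n - m - n`, where `m, n ∈ [0, 1]` are the degrees of `u` in `M` and `N`.
This is `≤ 0`, while every summand is `≥ 0`; hence all summands vanish.

Symmetry of the median follows: if some `Mᵢ u v > 0`, then `Mⱼ(u, ≽ v) = 1 - Mⱼ(v, ≻ u)` and
`Mⱼ(u, ≻ v) = 1 - Mⱼ(v, ≽ u)` for all `j`, and the median commutes with `t ↦ 1 - t`; if all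
`Mᵢ u v = 0`, both sides are zero.  The definition of the median telescopes along the strict
preference order (`sum_medM_of_upper`), so its partial sums `med(x, ≽ y)` and its degrees are the
medians of those of the `Mᵢ`.  Stability is then a majority argument: on an edge `{u, v}` two of
the three matchings saturate the same endpoint, and so does the median.
-/


open Finset
open scoped Classical

variable {V : Type*}

/-- The median (second largest) of three reals. -/
noncomputable def mid3 (a b c : ℝ) : ℝ :=
  a + b + c - max a (max b c) - min a (min b c)

/-- The median matching `med(M₁, M₂, M₃)` (computed from the perspective of the first
endpoint of each edge). -/
noncomputable def medM [Fintype V] (sat : V → V → ℚ) (M₁ M₂ M₃ : V → V → ℝ) :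
    V → V → ℝ := fun x y =>
  if Adj sat x y then
    mid3 (wge sat M₁ x y) (wge sat M₂ x y) (wge sat M₃ x y) -
      mid3 (wgt sat M₁ x y) (wgt sat M₂ x y) (wgt sat M₃ x y)
  else 0

/-! ### Medians of three reals -/

lemma mid3_mono {a b c a' b' c' : ℝ} (ha : a ≤ a') (hb : b ≤ b') (hc : c ≤ c') :
    mid3 a b c ≤ mid3 a' b' c' := by
  unfold mid3; grind

lemma mid3_self (a : ℝ) : mid3 a a a = a := by
  unfold mid3; grind

lemma mid3_one_sub (a b c : ℝ) : mid3 (1 - a) (1 - b) (1 - c) = 1 - mid3 a b c := by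
  unfold mid3; grind

/-- The majority principle behind stability of the median. -/
lemma one_le_mid3_or {a b c a' b' c' : ℝ} (ha : 1 ≤ a ∨ 1 ≤ a') (hb : 1 ≤ b ∨ 1 ≤ b')
    (hc : 1 ≤ c ∨ 1 ≤ c') : 1 ≤ mid3 a b c ∨ 1 ≤ mid3 a' b' c' := by
  unfold mid3; grind

/-! ### Partial sums of a fractional matching -/

lemma Adj.symm {sat : V → V → ℚ} {u v : V} (h : Adj sat u v) : Adj sat v u := Or.symm h

section

variable [Fintype V] {sat : V → V → ℚ} {M N : V → V → ℝ}

lemma filter_ge_eq_insert (hstrict : StrictPrefs sat) {x y : V} (h : Adj sat x y) :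
    univ.filter (fun z => Adj sat x z ∧ sat x y ≤ sat x z) =
      insert y (univ.filter (fun z => Adj sat x z ∧ sat x y < sat x z)) := by
  ext z
  simp only [mem_filter, mem_univ, true_and, mem_insert]
  constructor
  · rintro ⟨hz, hle⟩
    by_cases hzy : z = y
    · exact Or.inl hzy
    · exact Or.inr ⟨hz, lt_of_le_of_ne hle (hstrict x y z h hz (Ne.symm hzy))⟩
  · rintro (rfl | ⟨hz, hlt⟩)
    · exact ⟨h, le_rfl⟩
    · exact ⟨hz, hlt.le⟩

lemma wge_eq_add_wgt (hstrict : StrictPrefs sat) (M : V → V → ℝ) {x y : V}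
    (h : Adj sat x y) : wge sat M x y = M x y + wgt sat M x y := by
  unfold wge wgt
  rw [filter_ge_eq_insert hstrict h, sum_insert (by simp)]

lemma wgt_nonneg (hM : IsMatching sat M) (x y : V) : 0 ≤ wgt sat M x y :=
  sum_nonneg fun z _ => hM.nonneg x z

lemma wge_eq_sum_ite (hM : IsMatching sat M) (x y : V) :
    wge sat M x y = ∑ z, if sat x y ≤ sat x z then M x z else 0 := by
  unfold wge
  rw [sum_filter]
  refine sum_congr rfl fun z _ => ?_
  by_cases h : Adj sat x z
  · simp [h]
  · simp [h, hM.support x z h]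

lemma wgt_eq_sum_ite (hM : IsMatching sat M) (x y : V) :
    wgt sat M x y = ∑ z, if sat x y < sat x z then M x z else 0 := by
  unfold wgt
  rw [sum_filter]
  refine sum_congr rfl fun z _ => ?_
  by_cases h : Adj sat x z
  · simp [h]
  · simp [h, hM.support x z h]

/-! ### Complementary slackness -/

lemma one_le_wge_add_wgt (hstrict : StrictPrefs sat) (hM : IsMatching sat M)
    (hOS : OrdStable sat M) {u v : V} (h : Adj sat u v) :
    1 ≤ wge sat M u v + wgt sat M v u := by
  have h1 := wge_eq_add_wgt hstrict M h
  have h2 := wge_eq_add_wgt hstrict M h.symm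
  have h3 := wgt_nonneg hM u v
  have h4 := wgt_nonneg hM v u
  have h5 := hM.symm u v
  have h6 := hOS u v h
  by_contra hlt
  exact h6 ⟨by linarith, by linarith⟩

/-- Every pair of partners of `u`, one in `M` and one in `N`, is counted exactly once. -/
lemma sum_mul_wge_add_sum_mul_wgt (hM : IsMatching sat M) (hN : IsMatching sat N) (u : V) :
    ∑ v, M u v * wge sat N u v + ∑ v, N u v * wgt sat M u v =
      (∑ v, M u v) * ∑ v, N u v := by
  simp only [wge_eq_sum_ite hN, wgt_eq_sum_ite hM, mul_sum, sum_mul]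
  rw [sum_comm (f := fun v w => M u v * if sat u v ≤ sat u w then N u w else 0),
    ← sum_add_distrib]
  refine sum_congr rfl fun w _ => ?_
  rw [← sum_add_distrib]
  refine sum_congr rfl fun v _ => ?_
  by_cases h : sat u v ≤ sat u w
  · simp [h, not_lt.mpr h]
  · simp [h, not_le.mp h, mul_comm]

lemma sum_mul_wgt_swap (hM : IsMatching sat M) :
    ∑ u, ∑ v, M u v * wgt sat N v u = ∑ u, ∑ v, M u v * wgt sat N u v := by
  rw [sum_comm]
  exact sum_congr rfl fun u _ => sum_congr rfl fun v _ => by rw [hM.symm]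

lemma sum_slack_eq (hM : IsMatching sat M) :
    ∑ u, ∑ v, M u v * (wge sat N u v + wgt sat N v u - 1) =
      ∑ u, (∑ v, M u v * wge sat N u v + ∑ v, M u v * wgt sat N u v - ∑ v, M u v) := by
  simp only [mul_sub, mul_add, mul_one, sum_sub_distrib, sum_add_distrib]
  rw [sum_mul_wgt_swap hM]

lemma slack_nonneg (hstrict : StrictPrefs sat) (hM : IsMatching sat M)
    (hN : IsMatching sat N) (hOS : OrdStable sat N) (u v : V) :
    0 ≤ M u v * (wge sat N u v + wgt sat N v u - 1) := by
  by_cases h : Adj sat u v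
  · exact mul_nonneg (hM.nonneg u v) (by linarith [one_le_wge_add_wgt hstrict hN hOS h])
  · simp [hM.support u v h]

/-- An edge used by one stable matching is tight for every other stable matching. -/
lemma wge_add_wgt_eq_one (hstrict : StrictPrefs sat) (hM : IsMatching sat M)
    (hN : IsMatching sat N) (hOSM : OrdStable sat M) (hOSN : OrdStable sat N) {u v : V}
    (hpos : M u v ≠ 0) : wge sat N u v + wgt sat N v u = 1 := by
  have hS := slack_nonneg hstrict hM hN hOSN
  have hT : 0 ≤ ∑ u, ∑ v, N u v * (wge sat M u v + wgt sat M v u - 1) :=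
    sum_nonneg fun u _ => sum_nonneg fun v _ => slack_nonneg hstrict hN hM hOSM u v
  have htot : ∑ u, ∑ v, M u v * (wge sat N u v + wgt sat N v u - 1) +
      ∑ u, ∑ v, N u v * (wge sat M u v + wgt sat M v u - 1) ≤ 0 := by
    rw [sum_slack_eq hM, sum_slack_eq hN, ← sum_add_distrib]
    refine sum_nonpos fun x _ => ?_
    have h1 := sum_mul_wge_add_sum_mul_wgt hM hN x
    have h2 := sum_mul_wge_add_sum_mul_wgt hN hM x
    have hm := hM.degree_le_one x
    have hn := hN.degree_le_one x
    have hm0 : 0 ≤ ∑ v, M x v := sum_nonneg fun v _ => hM.nonneg x v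
    have hn0 : 0 ≤ ∑ v, N x v := sum_nonneg fun v _ => hN.nonneg x v
    nlinarith [mul_nonneg hm0 (sub_nonneg.mpr hn), mul_nonneg hn0 (sub_nonneg.mpr hm)]
  have hS0 : ∑ u, ∑ v, M u v * (wge sat N u v + wgt sat N v u - 1) = 0 :=
    le_antisymm (by linarith) (sum_nonneg fun u _ => sum_nonneg fun v _ => hS u v)
  rw [sum_eq_zero_iff_of_nonneg fun u _ => sum_nonneg fun v _ => hS u v] at hS0
  have hu := hS0 u (mem_univ u)
  rw [sum_eq_zero_iff_of_nonneg fun v _ => hS u v] at hu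
  have huv := (mul_eq_zero.mp (hu v (mem_univ v))).resolve_left hpos
  linarith

/-! ### The median matching -/

/-- The definition of the median telescopes over any set of neighbours of `x` that is upward
closed in the preference order of `x`. -/
lemma sum_medM_of_upper (hstrict : StrictPrefs sat) (M₁ M₂ M₃ : V → V → ℝ) (x : V)
    (s : Finset V) (hadj : ∀ z ∈ s, Adj sat x z)
    (hup : ∀ z ∈ s, ∀ w, Adj sat x w → sat x z ≤ sat x w → w ∈ s) :
    ∑ z ∈ s, medM sat M₁ M₂ M₃ x z =
      mid3 (∑ z ∈ s, M₁ x z) (∑ z ∈ s, M₂ x z) (∑ z ∈ s, M₃ x z) := by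
  induction s using Finset.induction_on_min_value (sat x) with
  | empty => simp [mid3_self]
  | insert a s ha hmin ih =>
    have haadj : Adj sat x a := hadj a (mem_insert_self a s)
    have hs : s = univ.filter (fun z => Adj sat x z ∧ sat x a < sat x z) := by
      ext z
      simp only [mem_filter, mem_univ, true_and]
      constructor
      · intro hz
        have hzadj := hadj z (mem_insert_of_mem hz)
        refine ⟨hzadj, lt_of_le_of_ne (hmin z hz) (hstrict x a z haadj hzadj ?_)⟩
        rintro rfl
        exact ha hz
      · rintro ⟨hz, hlt⟩
        refine (mem_insert.mp (hup a (mem_insert_self a s) z hz hlt.le)).resolve_left ?_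
        rintro rfl
        exact lt_irrefl _ hlt
    have hgt : ∀ M : V → V → ℝ, wgt sat M x a = ∑ z ∈ s, M x z := fun M => by
      rw [hs]; rfl
    have ih' := ih (fun z hz => hadj z (mem_insert_of_mem hz)) (by
      intro z hz w hw hle
      rw [hs] at hz ⊢
      simp only [mem_filter, mem_univ, true_and] at hz ⊢
      exact ⟨hw, hz.2.trans_le hle⟩)
    rw [sum_insert ha, sum_insert ha, sum_insert ha, sum_insert ha, ih']
    unfold medM
    rw [if_pos haadj]
    simp only [wge_eq_add_wgt hstrict _ haadj, hgt]
    ring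

lemma wge_medM (hstrict : StrictPrefs sat) (M₁ M₂ M₃ : V → V → ℝ) (x y : V) :
    wge sat (medM sat M₁ M₂ M₃) x y =
      mid3 (wge sat M₁ x y) (wge sat M₂ x y) (wge sat M₃ x y) := by
  unfold wge
  refine sum_medM_of_upper hstrict M₁ M₂ M₃ x _ (by simp +contextual) ?_
  intro z hz w hw hle
  simp only [mem_filter, mem_univ, true_and] at hz ⊢
  exact ⟨hw, hz.2.trans hle⟩

lemma sum_medM_le_one (hstrict : StrictPrefs sat) {M₁ M₂ M₃ : V → V → ℝ}
    (hM₁ : IsMatching sat M₁) (hM₂ : IsMatching sat M₂) (hM₃ : IsMatching sat M₃) (x : V) :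
    ∑ y, medM sat M₁ M₂ M₃ x y ≤ 1 := by
  have hsub : ∀ M : V → V → ℝ, (∀ y, ¬ Adj sat x y → M x y = 0) →
      ∑ y ∈ univ.filter (fun y => Adj sat x y), M x y = ∑ y, M x y := by
    intro M h
    refine sum_subset (filter_subset _ _) fun y _ hy => h y ?_
    simpa using hy
  rw [← hsub _ fun y hy => by simp [medM, hy],
    sum_medM_of_upper hstrict M₁ M₂ M₃ x _ (by simp) (by simp +contextual),
    hsub _ (hM₁.support x), hsub _ (hM₂.support x), hsub _ (hM₃.support x)]
  exact (mid3_mono (hM₁.degree_le_one x) (hM₂.degree_le_one x) (hM₃.degree_le_one x)).trans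
    (mid3_self 1).le

lemma medM_nonneg (hstrict : StrictPrefs sat) {M₁ M₂ M₃ : V → V → ℝ}
    (hM₁ : IsMatching sat M₁) (hM₂ : IsMatching sat M₂) (hM₃ : IsMatching sat M₃) (x y : V) :
    0 ≤ medM sat M₁ M₂ M₃ x y := by
  by_cases h : Adj sat x y
  · have hle : ∀ {M : V → V → ℝ}, IsMatching sat M → wgt sat M x y ≤ wge sat M x y := by
      intro M hM
      rw [wge_eq_add_wgt hstrict M h]
      linarith [hM.nonneg x y]
    simp only [medM, if_pos h]
    exact sub_nonneg.mpr (mid3_mono (hle hM₁) (hle hM₂) (hle hM₃))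
  · simp [medM, h]

lemma medM_symm (hstrict : StrictPrefs sat) {M₁ M₂ M₃ : V → V → ℝ}
    (hM₁ : IsMatching sat M₁) (hM₂ : IsMatching sat M₂) (hM₃ : IsMatching sat M₃)
    (hOS₁ : OrdStable sat M₁) (hOS₂ : OrdStable sat M₂) (hOS₃ : OrdStable sat M₃) (u v : V) :
    medM sat M₁ M₂ M₃ u v = medM sat M₁ M₂ M₃ v u := by
  by_cases h : Adj sat u v
  · -- If the edge is tight for all three matchings, the median commutes with `t ↦ 1 - t`.
    have key : (∀ M ∈ ({M₁, M₂, M₃} : Set (V → V → ℝ)),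
        wge sat M u v = 1 - wgt sat M v u ∧ wgt sat M u v = 1 - wge sat M v u) →
        medM sat M₁ M₂ M₃ u v = medM sat M₁ M₂ M₃ v u := by
      intro hk
      obtain ⟨h1, h1'⟩ := hk M₁ (by simp)
      obtain ⟨h2, h2'⟩ := hk M₂ (by simp)
      obtain ⟨h3, h3'⟩ := hk M₃ (by simp)
      simp only [medM, if_pos h, if_pos h.symm]
      rw [h1, h2, h3, h1', h2', h3', mid3_one_sub, mid3_one_sub]
      ring
    have tight : ∀ {M N : V → V → ℝ}, IsMatching sat M → OrdStable sat M →
        IsMatching sat N → OrdStable sat N → M u v ≠ 0 →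
        wge sat N u v = 1 - wgt sat N v u ∧ wgt sat N u v = 1 - wge sat N v u := by
      intro M N hM hOM hN hON hne
      have e1 := wge_add_wgt_eq_one hstrict hM hN hOM hON hne
      have e2 := wge_add_wgt_eq_one hstrict hM hN hOM hON (u := v) (v := u)
        (by rwa [hM.symm v u])
      exact ⟨by linarith, by linarith⟩
    have all : ∀ {M : V → V → ℝ}, IsMatching sat M → OrdStable sat M → M u v ≠ 0 →
        medM sat M₁ M₂ M₃ u v = medM sat M₁ M₂ M₃ v u := by
      intro M hM hOM hne
      refine key ?_
      rintro N (rfl | rfl | rfl)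
      · exact tight hM hOM hM₁ hOS₁ hne
      · exact tight hM hOM hM₂ hOS₂ hne
      · exact tight hM hOM hM₃ hOS₃ hne
    by_cases z1 : M₁ u v = 0
    · by_cases z2 : M₂ u v = 0
      · by_cases z3 : M₃ u v = 0
        · simp [medM, h, h.symm, wge_eq_add_wgt hstrict _ h, wge_eq_add_wgt hstrict _ h.symm,
            z1, z2, z3, hM₁.symm v u, hM₂.symm v u, hM₃.symm v u]
        · exact all hM₃ hOS₃ z3
      · exact all hM₂ hOS₂ z2
    · exact all hM₁ hOS₁ z1
  · have h' : ¬ Adj sat v u := fun hh => h hh.symm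
    simp [medM, h, h']

lemma ordStable_medM (hstrict : StrictPrefs sat) {M₁ M₂ M₃ : V → V → ℝ}
    (hOS₁ : OrdStable sat M₁) (hOS₂ : OrdStable sat M₂) (hOS₃ : OrdStable sat M₃) :
    OrdStable sat (medM sat M₁ M₂ M₃) := by
  intro u v h
  have hor : ∀ {M : V → V → ℝ}, OrdStable sat M → 1 ≤ wge sat M u v ∨ 1 ≤ wge sat M v u := by
    intro M hM
    simpa only [not_and_or, not_lt] using hM u v h
  rw [wge_medM hstrict, wge_medM hstrict, not_and_or, not_lt, not_lt]
  exact one_le_mid3_or (hor hOS₁) (hor hOS₂) (hor hOS₃)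

end

/-- for instances with strict preferences, the median of three ordinally
stable fractional matchings is a well-defined fractional matching (in particular it is
symmetric in the two endpoints of every edge) and it is ordinally stable. -/
theorem median_of_ordinallyStable_is_ordinallyStable [Fintype V]
    (sat : V → V → ℚ) (hinst : IsInstance sat) (hstrict : StrictPrefs sat)
    (M₁ M₂ M₃ : V → V → ℝ)
    (hM₁ : IsMatching sat M₁) (hM₂ : IsMatching sat M₂) (hM₃ : IsMatching sat M₃)
    (hOS₁ : OrdStable sat M₁) (hOS₂ : OrdStable sat M₂) (hOS₃ : OrdStable sat M₃) :
    IsMatching sat (medM sat M₁ M₂ M₃) ∧ OrdStable sat (medM sat M₁ M₂ M₃) :=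
  ⟨{ symm := medM_symm hstrict hM₁ hM₂ hM₃ hOS₁ hOS₂ hOS₃
     nonneg := medM_nonneg hstrict hM₁ hM₂ hM₃
     support := fun u v h => by simp [medM, h]
     degree_le_one := sum_medM_le_one hstrict hM₁ hM₂ hM₃ },
    ordStable_medM hstrict hOS₁ hOS₂ hOS₃⟩
end

section
/- Let G be a bipartite graph with cardinal preferences sat, let M be an ordinally stable fractional matching of (G, sat), and let M₁, …, M_k together with positive reals x₁, …, x_k (Σ_j x_j = 1) be a support of M. Then every M_j, j ∈ [k], is a stable integral matching, i.e., for every edge {u,v} of G, M_j(u, ≽ v) = 1 or M_j(v, ≽ u) = 1. -/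
/-!
For fixed `u, v`, the quantity `M(u, ≽ v)` is linear in `M` (`wge_eq_sum`) and at most `1` for
every matching (`wge_le_one`). Ordinal stability of `M` gives, for each edge `{u, v}`, that
`M(u, ≽ v) ≥ 1` or `M(v, ≽ u) ≥ 1`. Such a value is a convex combination, with positive weights,
of the values of the supporting matchings, so all of these equal `1` (`eq_one_of_one_le_sum`).
-/

open Finset
open scoped Classical

variable {V : Type*}

/-- `M(u, ≽ v)` is bounded by the total matching value of `u`. -/
theorem wge_le_one [Fintype V] {sat : V → V → ℚ} {M : V → V → ℝ}
    (hM : IsMatching sat M) (u v : V) : wge sat M u v ≤ 1 :=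
  (Finset.sum_le_sum_of_subset_of_nonneg (Finset.filter_subset _ _)
    (fun z _ _ => hM.nonneg u z)).trans (hM.degree_le_one u)

/-- `M(u, ≽ v)` is linear in `M`, hence commutes with convex combinations. -/
theorem wge_eq_sum [Fintype V] {sat : V → V → ℚ} {M : V → V → ℝ} {k : ℕ}
    {x : Fin k → ℝ} {Ms : Fin k → V → V → ℝ}
    (hconv : ∀ u v, M u v = ∑ j, x j * Ms j u v) (u v : V) :
    wge sat M u v = ∑ j, x j * wge sat (Ms j) u v := by
  simp only [wge, hconv, Finset.mul_sum]
  exact Finset.sum_comm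

/-- A convex combination with positive weights of numbers at most `1` reaches `1` only if
every one of the numbers equals `1`. -/
theorem eq_one_of_one_le_sum {k : ℕ} {x w : Fin k → ℝ} (hx : ∀ j, 0 < x j)
    (hxsum : ∑ j, x j = 1) (hw : ∀ j, w j ≤ 1) (h : 1 ≤ ∑ j, x j * w j) (j : Fin k) :
    w j = 1 := by
  by_contra hne
  have hlt : w j < 1 := lt_of_le_of_ne (hw j) hne
  have : ∑ i, x i * w i < ∑ i, x i :=
    Finset.sum_lt_sum (fun i _ => mul_le_of_le_one_right (hx i).le (hw i))
      ⟨j, Finset.mem_univ j, mul_lt_of_lt_one_right (hx j) hlt⟩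
  linarith

/-- every integral matching in a support of an ordinally stable fractional
matching of a bipartite instance is a stable integral matching: for every edge `{u,v}`,
`M_j(u, ≽ v) = 1` or `M_j(v, ≽ u) = 1`. -/
theorem support_of_ordinallyStable_is_stable [Fintype V]
    (sat : V → V → ℚ) (hinst : IsInstance sat)
    (hbip : ∃ U : Set V, BipartiteWith sat U)
    (M : V → V → ℝ) (hM : IsMatching sat M) (hOS : OrdStable sat M)
    (k : ℕ) (x : Fin k → ℝ) (Ms : Fin k → V → V → ℝ)
    (hx : ∀ j, 0 < x j) (hxsum : ∑ j, x j = 1)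
    (hMs : ∀ j, IsMatching sat (Ms j) ∧ IntegralMatching (Ms j))
    (hconv : ∀ u v, M u v = ∑ j, x j * Ms j u v) :
    ∀ j, ∀ u v, Adj sat u v → (wge sat (Ms j) u v = 1 ∨ wge sat (Ms j) v u = 1) := by
  intro j u v huv
  rcases not_and_or.mp (hOS u v huv) with h | h <;> rw [not_lt, wge_eq_sum hconv] at h
  · exact Or.inl (eq_one_of_one_le_sum hx hxsum (fun i => wge_le_one (hMs i).1 u v) h j)
  · exact Or.inr (eq_one_of_one_le_sum hx hxsum (fun i => wge_le_one (hMs i).1 v u) h j)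
end

section
/- Let G be a bipartite graph with cardinal preferences sat (ties allowed) and let γ be a real number. Then (G, sat) admits an ordinally stable fractional matching M with welfare(M) ≥ γ if and only if (G, sat) admits a stable integral matching N with welfare(N) ≥ γ. -/
/-!
If an edge `uv` is not ordinally blocking for a fractional matching `M`, then one endpoint, say `u`,
satisfies `M(u, ≽ v) = 1`: the agent `u` is fully matched and every partner of `u` in the support of
`M` is at least as good as `v`. Hence every integral matching `N` that lives on the support of `M`
and covers all agents fully matched by `M` is stable (`wge_of_cover`).

It remains to find such an `N` whose welfare is at least that of `M`. Padding `M` with its slack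
gives the doubly stochastic matrix `[[M, D], [D, M]]` with `D = diag(1 - deg M)` (`padded`), which
Birkhoff's theorem writes as a convex combination of permutation matrices. Each permutation is read
as an integral matching through the rows in `U` and the columns outside `U` of its upper left block
(`matchOf`); here bipartiteness is used. `M` is the corresponding convex combination of these
matchings and welfare is linear, so some permutation of positive weight yields a matching of
welfare at least `welfare M`. Positive weight forces the permutation to stay in the support of the
padded matrix, which gives both the support condition and the covering of fully matched agents.
-/

open Finset
open scoped Classical

variable {V : Type*}

/-- If `M(u, ≽ v) = 1`, then `u` is fully matched and all partners of `u` in the support of `M` are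
at least as good as `v`. -/
lemma full_of_wge [Fintype V] {sat : V → V → ℚ} {M : V → V → ℝ} (hM : IsMatching sat M)
    {u v : V} (h : 1 ≤ wge sat M u v) :
    ∑ z, M u z = 1 ∧ ∀ z, 0 < M u z → Adj sat u z ∧ sat u v ≤ sat u z := by
  have hsplit := Finset.sum_filter_add_sum_filter_not Finset.univ
    (fun z => Adj sat u z ∧ sat u v ≤ sat u z) (fun z => M u z)
  have hdeg := hM.degree_le_one u
  have hrest : 0 ≤ ∑ z ∈ Finset.univ.filter (fun z => ¬ (Adj sat u z ∧ sat u v ≤ sat u z)),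
      M u z := Finset.sum_nonneg fun z _ => hM.nonneg u z
  unfold wge at h
  refine ⟨by linarith, fun z hz => ?_⟩
  by_contra hcon
  have hmem : z ∈ Finset.univ.filter (fun z => ¬ (Adj sat u z ∧ sat u v ≤ sat u z)) :=
    Finset.mem_filter.2 ⟨Finset.mem_univ z, hcon⟩
  have hle := Finset.single_le_sum (f := fun z => M u z) (fun z _ => hM.nonneg u z) hmem
  linarith

/-- The key stability transfer: a matching `N` that assigns to `u`, whenever `M` matches `u` fully,
a partner in the support of `M` inherits `M(u, ≽ v) = 1`. -/
lemma wge_of_cover [Fintype V] {sat : V → V → ℚ} {M N : V → V → ℝ} (hM : IsMatching sat M)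
    (hN : ∀ u v, 0 ≤ N u v) {u v : V}
    (hcov : ∑ z, M u z = 1 → ∃ z, 0 < M u z ∧ N u z = 1) (h : 1 ≤ wge sat M u v) :
    1 ≤ wge sat N u v := by
  obtain ⟨hfull, hsupp⟩ := full_of_wge hM h
  obtain ⟨z, hz, hNz⟩ := hcov hfull
  rw [← hNz]
  exact Finset.single_le_sum (f := fun z => N u z) (fun z _ => hN u z)
    (Finset.mem_filter.2 ⟨Finset.mem_univ z, hsupp z hz⟩)

/-- The doubly stochastic completion `[[M, D], [D, M]]` of a symmetric fractional matching, where
`D` is the diagonal matrix of slacks `1 - ∑ u, M v u`. -/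
noncomputable def padded [Fintype V] (M : V → V → ℝ) : Matrix (V ⊕ V) (V ⊕ V) ℝ :=
  Matrix.fromBlocks (Matrix.of M) (Matrix.diagonal fun v => 1 - ∑ u, M v u)
    (Matrix.diagonal fun v => 1 - ∑ u, M v u) (Matrix.of M)

lemma padded_mem [Fintype V] {sat : V → V → ℚ} {M : V → V → ℝ} (hM : IsMatching sat M) :
    padded M ∈ doublyStochastic ℝ (V ⊕ V) := by
  have hcol : ∀ v, ∑ u, M u v = ∑ u, M v u := fun v =>
    Finset.sum_congr rfl fun u _ => hM.symm u v
  have hdiag : ∀ i j, 0 ≤ Matrix.diagonal (fun v => 1 - ∑ u, M v u) i j := by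
    intro i j
    rw [Matrix.diagonal_apply]
    split_ifs
    · linarith [hM.degree_le_one i]
    · exact le_rfl
  rw [mem_doublyStochastic_iff_sum]
  refine ⟨?_, ?_, ?_⟩
  · rintro (i | i) (j | j)
    · exact hM.nonneg i j
    · exact hdiag i j
    · exact hdiag i j
    · exact hM.nonneg i j
  · rintro (i | i) <;> simp [padded, Fintype.sum_sum_type, Matrix.diagonal_apply]
  · rintro (i | i) <;> simp [padded, Fintype.sum_sum_type, Matrix.diagonal_apply, hcol]

/-- The 0/1 matrix on agents read off from a permutation of `V ⊕ V`: an agent of `U` is matched along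
`σ`, an agent outside `U` along the inverse of `σ`, in both cases within the left copy of `V`. It is
symmetric when every pair `σ (inl u) = inl v` has exactly one of `u`, `v` in `U`, but not in
general. -/
noncomputable def matchOf (U : Set V) (σ : Equiv.Perm (V ⊕ V)) (u v : V) : ℝ :=
  if u ∈ U then (if σ (Sum.inl u) = Sum.inl v then 1 else 0)
  else (if σ (Sum.inl v) = Sum.inl u then 1 else 0)

/-- A permutation within the support of the padded matrix yields a matching that gives every
agent fully matched by `M` a partner from the support of `M`. -/
lemma matchOf_spec [Fintype V] {sat : V → V → ℚ} {M : V → V → ℝ} (hM : IsMatching sat M)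
    {U : Set V} (hU : BipartiteWith sat U) {σ : Equiv.Perm (V ⊕ V)}
    (hσ : ∀ i, 0 < padded M i (σ i)) :
    IsMatching sat (matchOf U σ) ∧
      ∀ u, ∑ z, M u z = 1 → ∃ z, 0 < M u z ∧ matchOf U σ u z = 1 := by
  have hpos : ∀ u v, σ (Sum.inl u) = Sum.inl v → 0 < M u v := by
    intro u v h
    have := hσ (Sum.inl u)
    rw [h] at this
    simpa [padded] using this
  have hadj : ∀ u v, 0 < M u v → Adj sat u v := by
    intro u v h
    by_contra hn
    rw [hM.support u v hn] at h
    exact lt_irrefl _ h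
  have hside : ∀ u v, σ (Sum.inl u) = Sum.inl v → (u ∈ U ↔ v ∉ U) := fun u v h =>
    hU u v (hadj u v (hpos u v h))
  have hnn : ∀ u v, 0 ≤ matchOf U σ u v := by
    intro u v
    unfold matchOf
    split_ifs <;> norm_num
  refine ⟨⟨?_, hnn, ?_, ?_⟩, ?_⟩
  · intro u v
    have h1 := hside u v
    have h2 := hside v u
    unfold matchOf
    split_ifs <;> first | rfl | (exfalso; tauto)
  · intro u v hn
    have hn' : ¬ Adj sat v u := fun h => hn (Or.symm h)
    unfold matchOf
    split_ifs with _ h h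
    · exact absurd (hadj _ _ (hpos _ _ h)) hn
    · rfl
    · exact absurd (hadj _ _ (hpos _ _ h)) hn'
    · rfl
  · intro u
    unfold matchOf
    by_cases hu : u ∈ U
    · simp only [hu, if_true, Finset.sum_boole]
      norm_cast
      refine Finset.card_le_one.2 fun a ha b hb => ?_
      simp only [Finset.mem_filter, Finset.mem_univ, true_and] at ha hb
      exact Sum.inl_injective (ha.symm.trans hb)
    · simp only [hu, if_false, Finset.sum_boole]
      norm_cast
      refine Finset.card_le_one.2 fun a ha b hb => ?_
      simp only [Finset.mem_filter, Finset.mem_univ, true_and] at ha hb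
      exact Sum.inl_injective (σ.injective (ha.trans hb.symm))
  · intro u hfull
    by_cases hu : u ∈ U
    ·
      -- The slack of `u` is zero, so `σ` cannot send row `u` to the right copy of `V`.
      rcases h : σ (Sum.inl u) with z | z
      · exact ⟨z, hpos u z h, by simp [matchOf, hu, h]⟩
      · have := hσ (Sum.inl u)
        rw [h] at this
        simp [padded, Matrix.diagonal_apply, hfull] at this
    ·
      -- Likewise column `u` cannot be hit from the right copy of `V`.
      rcases h : σ.symm (Sum.inl u) with z | z
      · have h' : σ (Sum.inl z) = Sum.inl u := by rw [← h, Equiv.apply_symm_apply]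
        exact ⟨z, by rw [hM.symm]; exact hpos z u h', by simp [matchOf, hu, h']⟩
      · have h' : σ (Sum.inr z) = Sum.inl u := by rw [← h, Equiv.apply_symm_apply]
        have := hσ (Sum.inr z)
        rw [h'] at this
        by_cases hzu : z = u
        · subst hzu
          simp [padded, hfull] at this
        · simp [padded, hzu] at this

lemma welfare_sum [Fintype V] {ι : Type*} [Fintype ι] (sat : V → V → ℚ) (w : ι → ℝ)
    (N : ι → V → V → ℝ) {M : V → V → ℝ} (h : ∀ u v, M u v = ∑ i, w i * N i u v) :
    welfare sat M = ∑ i, w i * welfare sat (N i) := by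
  simp only [welfare, util, h, Finset.mul_sum]
  rw [Finset.sum_comm' (s := (Finset.univ : Finset ι)) (t := fun _ => Finset.univ)
    (t' := Finset.univ) (s' := fun _ => Finset.univ) (by simp)]
  refine Finset.sum_congr rfl fun v _ => ?_
  rw [Finset.sum_comm]
  refine Finset.sum_congr rfl fun i _ => Finset.sum_congr rfl fun u _ => by ring

/-- Every fractional matching of a bipartite instance is dominated in welfare by an integral
matching that gives every agent it matches fully a partner from its support. -/
lemma exists_integral_ge [Fintype V] {sat : V → V → ℚ} {M : V → V → ℝ} (hM : IsMatching sat M)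
    {U : Set V} (hU : BipartiteWith sat U) :
    ∃ N : V → V → ℝ, IsMatching sat N ∧ IntegralMatching N ∧ welfare sat M ≤ welfare sat N ∧
      ∀ u, ∑ z, M u z = 1 → ∃ z, 0 < M u z ∧ N u z = 1 := by
  obtain ⟨w, hw0, hw1, hwM⟩ := exists_eq_sum_perm_of_mem_doublyStochastic (padded_mem hM)
  have hentry : ∀ i j, padded M i j =
      ∑ σ : Equiv.Perm (V ⊕ V), w σ * (if σ i = j then 1 else 0) := by
    intro i j
    rw [← hwM, Matrix.sum_apply]
    refine Finset.sum_congr rfl fun σ _ => ?_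
    simp [PEquiv.toMatrix_apply, eq_comm]
  have hcomb : ∀ u v, M u v = ∑ σ, w σ * matchOf U σ u v := by
    intro u v
    by_cases hu : u ∈ U
    · simpa [matchOf, hu, padded] using hentry (Sum.inl u) (Sum.inl v)
    · rw [hM.symm]
      simpa [matchOf, hu, padded] using hentry (Sum.inl v) (Sum.inl u)
  have hwel := welfare_sum sat w (matchOf U) hcomb
  obtain ⟨σ, hσw, hσ⟩ : ∃ σ, 0 < w σ ∧ welfare sat M ≤ welfare sat (matchOf U σ) := by
    by_contra! hcon
    obtain ⟨σ, -, hσ⟩ : ∃ σ ∈ Finset.univ, 0 < w σ :=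
      Finset.exists_lt_of_sum_lt (f := fun _ => (0 : ℝ)) (by simp [hw1])
    have hlt : ∑ σ, w σ * welfare sat (matchOf U σ) < ∑ σ, w σ * welfare sat M := by
      refine Finset.sum_lt_sum (fun τ _ => ?_)
        ⟨σ, Finset.mem_univ σ, mul_lt_mul_of_pos_left (hcon σ hσ) hσ⟩
      rcases (hw0 τ).eq_or_lt with h | h
      · simp [← h]
      · exact (mul_lt_mul_of_pos_left (hcon τ h) h).le
    rw [← Finset.sum_mul, hw1, one_mul, ← hwel] at hlt
    exact lt_irrefl _ hlt
  have hsupp : ∀ i, 0 < padded M i (σ i) := by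
    intro i
    rw [hentry]
    refine Finset.sum_pos' (fun τ _ => mul_nonneg (hw0 τ) (by split_ifs <;> norm_num))
      ⟨σ, Finset.mem_univ σ, by simpa using hσw⟩
  obtain ⟨hN, hcov⟩ := matchOf_spec hM hU hsupp
  refine ⟨matchOf U σ, hN, fun u v => ?_, hσ, hcov⟩
  unfold matchOf
  split_ifs <;> simp

/-- a bipartite instance (ties allowed) admits an ordinally stable
fractional matching of welfare at least `γ` iff it admits a stable integral matching of
welfare at least `γ`. -/
theorem exists_ordinallyStable_welfare_iff_exists_stable_integral [Fintype V]
    (sat : V → V → ℚ) (hinst : IsInstance sat)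
    (hbip : ∃ U : Set V, BipartiteWith sat U) (γ : ℝ) :
    (∃ M : V → V → ℝ, IsMatching sat M ∧ OrdStable sat M ∧ γ ≤ welfare sat M) ↔
    (∃ N : V → V → ℝ, IsMatching sat N ∧ IntegralMatching N ∧ OrdStable sat N ∧
      γ ≤ welfare sat N) := by
  constructor
  · rintro ⟨M, hM, hstab, hγ⟩
    obtain ⟨U, hU⟩ := hbip
    obtain ⟨N, hN, hint, hwel, hcov⟩ := exists_integral_ge hM hU
    refine ⟨N, hN, hint, fun u v huv hblock => hstab u v huv ⟨?_, ?_⟩, hγ.trans hwel⟩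
    · by_contra! h
      exact absurd hblock.1 (not_lt.2 (wge_of_cover hM hN.nonneg (hcov u) h))
    · by_contra! h
      exact absurd hblock.2 (not_lt.2 (wge_of_cover hM hN.nonneg (hcov v) h))
  · rintro ⟨N, hN, -, hstab, hγ⟩
    exact ⟨N, hN, hstab, hγ⟩
end

section
/- Let G be a bipartite graph with cardinal preferences sat (ties allowed) and let τ be a non-negative integer. Then (G, sat) admits an ordinally stable fractional matching M with at least τ fully matched agents if and only if (G, sat) admits a stable integral matching N in which at least τ agents are matched. -/
/-!
Let `M` be ordinally stable. If `M(x, ≽ y) = 1`, then `x` is fully matched and every neighbour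
in the support of `M` at `x` is weakly preferred to `y`. Hence any integral matching `N` that is
contained in the support of `M` and covers all agents fully matched by `M` satisfies
`N(x, ≽ y) = 1` as well, so `N` inherits stability and matches at least as many agents. The
converse is immediate, since an agent matched by an integral matching is fully matched.

Such an `N` comes from Birkhoff's theorem. The matrix `M + diag(1 - deg)`, indexed by `V × V`, is
doubly stochastic, so some permutation `σ` of `V` has all entries `(v, σ v)` in its support
(`exists_perm_in_support`). A fully matched agent has diagonal entry zero, so `σ` moves it along an
edge in the support of `M`, and likewise some support edge is moved into it. With bipartition `U`,
the pairs `{u, σ u}` with `u ∈ U` and `σ u ∉ U` form a matching that covers fully matched agents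
on both sides (`exists_integral_matching_in_support`).
-/

open Finset
open scoped Classical

variable {V : Type*}

/-- A permutation supported on the doubly stochastic completion `M + diag(1 - deg)`: it moves agents
only along edges in the support of `M`, and fixes no fully matched agent. -/
lemma exists_perm_in_support [Fintype V] {sat : V → V → ℚ} {M : V → V → ℝ}
    (hM : IsMatching sat M) :
    ∃ σ : Equiv.Perm V, (∀ v, σ v ≠ v → 0 < M v (σ v)) ∧
      ∀ v, ∑ u, M v u = 1 → 0 < M v (σ v) := by
  let D : Matrix V V ℝ := fun v w => M v w + if v = w then 1 - ∑ u, M v u else 0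
  have hD : D ∈ doublyStochastic ℝ V := by
    rw [mem_doublyStochastic_iff_sum]
    refine ⟨fun i j => ?_, fun i => ?_, fun j => ?_⟩
    · have h1 := hM.nonneg i j
      have h2 := hM.degree_le_one i
      simp only [D]
      split_ifs <;> linarith
    · simp [D, Finset.sum_add_distrib]
    · have : ∑ i, M i j = ∑ i, M j i := Finset.sum_congr rfl fun i _ => hM.symm i j
      simp [D, Finset.sum_add_distrib, this]
  obtain ⟨w, hw0, hw1, hwD⟩ := exists_eq_sum_perm_of_mem_doublyStochastic hD
  obtain ⟨σ, hσ⟩ : ∃ σ, 0 < w σ := by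
    by_contra! h
    have : ∑ σ, w σ ≤ 0 := Finset.sum_nonpos fun σ _ => h σ
    linarith
  have hpos : ∀ v, 0 < D v (σ v) := by
    intro v
    have h1 : D v (σ v) = ∑ ρ, w ρ * (ρ.permMatrix ℝ) v (σ v) := by
      rw [← hwD, Matrix.sum_apply]
      simp
    have h2 : w σ * (σ.permMatrix ℝ) v (σ v) ≤ ∑ ρ, w ρ * (ρ.permMatrix ℝ) v (σ v) := by
      refine Finset.single_le_sum (f := fun ρ => w ρ * (ρ.permMatrix ℝ) v (σ v))
        (fun ρ _ => mul_nonneg (hw0 ρ) ?_) (Finset.mem_univ σ)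
      simp only [Equiv.Perm.permMatrix, PEquiv.toMatrix_apply]
      split_ifs <;> norm_num
    have h3 : (σ.permMatrix ℝ) v (σ v) = 1 := by
      simp [Equiv.Perm.permMatrix, PEquiv.toMatrix_apply, Equiv.toPEquiv_apply]
    rw [h3, mul_one] at h2
    linarith
  refine ⟨σ, fun v hv => ?_, fun v hv => ?_⟩
  · simpa [D, Ne.symm hv] using hpos v
  · simpa [D, hv] using hpos v

/-- In a bipartite instance, the support of a fractional matching contains an integral matching
covering every fully matched agent. -/
lemma exists_integral_matching_in_support [Fintype V] {sat : V → V → ℚ} {U : Set V}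
    (hU : BipartiteWith sat U) {M : V → V → ℝ} (hM : IsMatching sat M) :
    ∃ N : V → V → ℝ, IsMatching sat N ∧ IntegralMatching N ∧
      (∀ u v, 0 < N u v → 0 < M u v) ∧ ∀ v, ∑ u, M v u = 1 → ∃ u, N v u = 1 := by
  obtain ⟨σ, hmove, hfull⟩ := exists_perm_in_support hM
  have hadj : ∀ u v, 0 < M u v → Adj sat u v := by
    intro u v h
    by_contra hn
    exact h.ne' (hM.support u v hn)
  let P : V → V → Prop := fun v w => (v ∈ U ∧ w ∉ U ∧ σ v = w) ∨ (v ∉ U ∧ w ∈ U ∧ σ w = v)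
  have hPsymm : ∀ v w, P v w ↔ P w v := fun v w => by simp only [P]; tauto
  have hPuniq : ∀ v w w', P v w → P v w' → w = w' := by
    rintro v w w' (⟨h1, -, h3⟩ | ⟨h1, -, h3⟩) (⟨g1, -, g3⟩ | ⟨g1, -, g3⟩)
    · exact h3.symm.trans g3
    · exact absurd h1 g1
    · exact absurd g1 h1
    · exact σ.injective (h3.trans g3.symm)
  have hPM : ∀ v w, P v w → 0 < M v w := by
    rintro v w (⟨h1, h2, rfl⟩ | ⟨h1, h2, rfl⟩)
    · exact hmove v fun h => h2 (by rwa [h])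
    · rw [hM.symm]
      exact hmove w fun h => h1 (by rwa [h])
  let N : V → V → ℝ := fun v w => if P v w then 1 else 0
  have hNP : ∀ v w, 0 < N v w → P v w := by
    intro v w h
    by_contra hn
    simp [N, hn] at h
  refine ⟨N, ⟨fun u v => ?_, fun u v => ?_, fun u v h => ?_, fun v => ?_⟩, fun u v => ?_,
    fun u v h => hPM u v (hNP u v h), fun v hv => ?_⟩
  · simp only [N, hPsymm u v]
  · simp only [N]
    split_ifs <;> norm_num
  · have : ¬ P u v := fun hP => h (hadj u v (hPM u v hP))
    simp [N, this]
  · have : (Finset.univ.filter fun w => P v w).card ≤ 1 := by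
      rw [Finset.card_le_one]
      intro a ha b hb
      exact hPuniq v a b (by simpa using ha) (by simpa using hb)
    have hsum : ∑ w, N v w = ((Finset.univ.filter fun w => P v w).card : ℝ) := by
      rw [← Finset.sum_boole]
    rw [hsum]
    exact_mod_cast this
  · simp only [N]
    split_ifs <;> simp
  · by_cases hvU : v ∈ U
    · have h1 : P v (σ v) := Or.inl ⟨hvU, (hU _ _ (hadj _ _ (hfull v hv))).1 hvU, rfl⟩
      exact ⟨σ v, by simp [N, h1]⟩
    · -- On the other side the partner is the preimage, which is not `v` as `σ` does not fix `v`.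
      have hself : ¬ Adj sat v v := fun h => by
        have := hU v v h
        tauto
      have hne : σ (σ.symm v) ≠ σ.symm v := by
        intro h
        have h2 : σ v = v := by
          rw [Equiv.apply_symm_apply] at h
          conv_lhs => rw [h]
          exact σ.apply_symm_apply v
        have h3 := hfull v hv
        rw [h2] at h3
        exact hself (hadj v v h3)
      have h4 := hadj _ _ (hmove _ hne)
      rw [Equiv.apply_symm_apply] at h4
      have h1 : P v (σ.symm v) := Or.inr ⟨hvU, (hU _ _ h4).2 hvU, σ.apply_symm_apply v⟩
      exact ⟨σ.symm v, by simp [N, h1]⟩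

/-- If `M(x, ≽ y)` reaches one, then `M` has no weight at `x` outside the agents counted there. -/
lemma IsMatching.of_one_le_wge [Fintype V] {sat : V → V → ℚ} {M : V → V → ℝ}
    (hM : IsMatching sat M) {x y : V} (h : 1 ≤ wge sat M x y) :
    ∑ z, M x z = 1 ∧ ∀ z, 0 < M x z → Adj sat x z ∧ sat x y ≤ sat x z := by
  have hsplit := Finset.sum_filter_add_sum_filter_not Finset.univ
    (fun z => Adj sat x z ∧ sat x y ≤ sat x z) (fun z => M x z)
  have hrest : 0 ≤ ∑ z ∈ Finset.univ.filter (fun z => ¬ (Adj sat x z ∧ sat x y ≤ sat x z)), M x z :=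
    Finset.sum_nonneg fun z _ => hM.nonneg x z
  have hdeg := hM.degree_le_one x
  unfold wge at h
  refine ⟨by linarith, fun z hz => ?_⟩
  by_contra hn
  have : M x z ≤ ∑ z ∈ Finset.univ.filter (fun z => ¬ (Adj sat x z ∧ sat x y ≤ sat x z)), M x z :=
    Finset.single_le_sum (f := fun z => M x z) (fun z _ => hM.nonneg x z) (by simpa using hn)
  linarith

/-- a bipartite instance (ties allowed) admits an ordinally stable
fractional matching with at least `τ` fully matched agents iff it admits a stable
integral matching in which at least `τ` agents are matched. -/
theorem exists_ordinallyStable_fully_iff_exists_stable_integral [Fintype V]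
    (sat : V → V → ℚ) (hinst : IsInstance sat)
    (hbip : ∃ U : Set V, BipartiteWith sat U) (τ : ℕ) :
    (∃ M : V → V → ℝ, IsMatching sat M ∧ OrdStable sat M ∧ τ ≤ nfully M) ↔
    (∃ N : V → V → ℝ, IsMatching sat N ∧ IntegralMatching N ∧ OrdStable sat N ∧
      τ ≤ (Finset.univ.filter (fun v => 0 < ∑ u, N v u)).card) := by
  constructor
  · rintro ⟨M, hM, hstab, hτ⟩
    obtain ⟨U, hU⟩ := hbip
    obtain ⟨N, hN, hint, hsupp, hcov⟩ := exists_integral_matching_in_support hU hM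
    have key : ∀ x y, 1 ≤ wge sat M x y → 1 ≤ wge sat N x y := by
      intro x y h
      obtain ⟨hfull, hpref⟩ := hM.of_one_le_wge h
      obtain ⟨z, hz⟩ := hcov x hfull
      rw [← hz]
      exact Finset.single_le_sum (f := fun z => N x z) (fun z _ => hN.nonneg x z)
        (by simpa using hpref z (hsupp x z (by rw [hz]; norm_num)))
    refine ⟨N, hN, hint, fun u v huv ⟨h1, h2⟩ => hstab u v huv ⟨?_, ?_⟩, hτ.trans ?_⟩
    · exact lt_of_not_ge fun h => absurd (key u v h) (not_le.2 h1)
    · exact lt_of_not_ge fun h => absurd (key v u h) (not_le.2 h2)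
    · refine Finset.card_le_card fun v hv => ?_
      simp only [Finset.mem_filter, Finset.mem_univ, true_and] at hv ⊢
      obtain ⟨z, hz⟩ := hcov v hv
      exact Finset.sum_pos' (fun u _ => hN.nonneg v u) ⟨z, Finset.mem_univ z, by rw [hz]; norm_num⟩
  · rintro ⟨N, hN, hint, hstab, hτ⟩
    refine ⟨N, hN, hstab, hτ.trans (Finset.card_le_card fun v hv => ?_)⟩
    simp only [Finset.mem_filter, Finset.mem_univ, true_and] at hv ⊢
    obtain ⟨z, -, hz⟩ := Finset.exists_ne_zero_of_sum_ne_zero hv.ne'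
    have h1 : N v z = 1 := (hint v z).resolve_left hz
    have h2 : N v z ≤ ∑ u, N v u :=
      Finset.single_le_sum (f := fun u => N v u) (fun u _ => hN.nonneg v u) (Finset.mem_univ z)
    exact le_antisymm (hN.degree_le_one v) (h1 ▸ h2)
end

section
/- Let (G, sat) be an instance with strict cardinal preferences and let M be an ordinally stable fractional matching. Then for every agent y, letting x be the (unique) neighbor of y maximizing sat(y, ·), we have M(x, ≽ y) = 1; in particular, x is fully matched under M. -/
/-!
Let `x` be the favourite neighbour of `y`. Strict preferences give `M(y, ≽ x) = M({x, y})`, and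
`M({x, y}) ≤ M(x, ≽ y)` always holds. Hence `M(x, ≽ y) < 1` would make the edge `{x, y}`
ordinally blocking, so stability forces `M(x, ≽ y) ≥ 1`; the degree bound at `x` then turns this
into equality, both for `M(x, ≽ y)` and for the total matching value of `x`.
-/

open Finset
open scoped Classical

variable {V : Type*}

/-- under strict preferences, in an ordinally stable fractional matching,
for every agent `y`, the most preferred neighbour `x` of `y` satisfies `M(x, ≽ y) = 1`;
in particular `x` is fully matched. -/
theorem mostPreferred_neighbour_fullyMatched [Fintype V]
    (sat : V → V → ℚ) (hinst : IsInstance sat) (hstrict : StrictPrefs sat)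
    (M : V → V → ℝ) (hM : IsMatching sat M) (hOS : OrdStable sat M) :
    ∀ y x, Adj sat y x → (∀ z, Adj sat y z → sat y z ≤ sat y x) →
      wge sat M x y = 1 ∧ ∑ u, M x u = 1 := by
  intro y x hyx hmax
  have hxy : Adj sat x y := Or.symm hyx
  -- By strictness, `x` is the only neighbour that `y` likes at least as much as `x`.
  have htop : wge sat M y x = M y x := by
    unfold wge
    refine Finset.sum_eq_single_of_mem x (by simp [hyx]) fun z hz hzx => ?_
    simp only [Finset.mem_filter, Finset.mem_univ, true_and] at hz
    exact absurd (le_antisymm (hmax z hz.1) hz.2) (hstrict y z x hz.1 hyx hzx)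
  have hle : M x y ≤ wge sat M x y :=
    Finset.single_le_sum (f := fun z => M x z) (fun z _ => hM.nonneg x z) (by simp [hxy])
  have hsum : wge sat M x y ≤ ∑ u, M x u :=
    Finset.sum_le_sum_of_subset_of_nonneg (Finset.filter_subset _ _)
      fun z _ _ => hM.nonneg x z
  have hdeg := hM.degree_le_one x
  -- If `M(x, ≽ y) < 1`, then `M(y, ≽ x) = M({x, y}) ≤ M(x, ≽ y) < 1`, so `{x, y}` blocks.
  have hone : 1 ≤ wge sat M x y := by
    by_contra! h
    refine hOS y x hyx ⟨?_, h⟩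
    rw [htop, hM.symm y x]
    exact hle.trans_lt h
  exact ⟨by linarith, by linarith⟩
end

section
/- Let (G, sat) be an instance with strict cardinal preferences and let M be an ordinally stable fractional matching. Then every agent that is matched under M is fully matched under M; hence an agent is matched under M if and only if it is fully matched under M. -/
/-!
Call an agent *fractional* if some edge at it has weight strictly between `0` and `1`. A matched
agent that is not fully matched is fractional, so it suffices that fractional agents are fully
matched.

If `M v z > 0` and `M(v, ≽ z) = 1`, then `z` is the worst partner of `v`; under strict preferences
an agent has at most one such partner (`eq_of_one_le_wge`). Every fractional agent `v` has a
fractional edge to some `z` with `M(v, ≽ z) < 1` (`exists_child`): any partner will do if `v` is not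
fully matched, and otherwise `v` has two partners and the better one works. Ordinal stability then
forces `M(z, ≽ v) = 1`, so `v` is the worst partner of `z`, and `v` is recovered from `z`. Hence
`v ↦ z` is an injective self-map of the finite set of fractional agents. It is therefore surjective,
so every fractional agent `x` satisfies `M(x, ≽ v) = 1` for some `v` and is fully matched.
-/

open Finset
open scoped Classical

variable {V : Type*}

theorem wge_le_sum [Fintype V] {sat : V → V → ℚ} {M : V → V → ℝ} (hM : IsMatching sat M)
    (v z : V) : wge sat M v z ≤ ∑ u, M v u :=
  Finset.sum_le_sum_of_subset_of_nonneg (Finset.filter_subset _ _) fun _ _ _ => hM.nonneg _ _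

theorem wge_add_le_one [Fintype V] {sat : V → V → ℚ} {M : V → V → ℝ} (hM : IsMatching sat M)
    {v z w : V} (h : sat v w < sat v z) : wge sat M v z + M v w ≤ 1 := by
  have hw : w ∉ Finset.univ.filter (fun y => Adj sat v y ∧ sat v z ≤ sat v y) := by
    simp [h]
  have h1 := Finset.sum_insert (f := M v) hw
  have h2 := Finset.sum_le_sum_of_subset_of_nonneg (f := M v)
    (Finset.subset_univ (insert w (Finset.univ.filter
      (fun y => Adj sat v y ∧ sat v z ≤ sat v y)))) fun _ _ _ => hM.nonneg _ _
  have h3 := hM.degree_le_one v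
  unfold wge
  linarith

theorem adj_of_pos [Fintype V] {sat : V → V → ℚ} {M : V → V → ℝ} (hM : IsMatching sat M)
    {u v : V} (h : 0 < M u v) : Adj sat u v := by
  by_contra hn
  exact h.ne' (hM.support u v hn)

/-- The worst partner of an agent is unique under strict preferences. -/
theorem eq_of_one_le_wge [Fintype V] {sat : V → V → ℚ} {M : V → V → ℝ}
    (hstrict : StrictPrefs sat) (hM : IsMatching sat M) {c v w : V}
    (hv : 0 < M c v) (hw : 0 < M c w) (hcv : 1 ≤ wge sat M c v) (hcw : 1 ≤ wge sat M c w) :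
    v = w := by
  by_contra hne
  rcases lt_or_gt_of_ne (hstrict c v w (adj_of_pos hM hv) (adj_of_pos hM hw) hne) with h | h
  · linarith [wge_add_le_one hM h]
  · linarith [wge_add_le_one hM h]

theorem exists_child [Fintype V] {sat : V → V → ℚ} {M : V → V → ℝ}
    (hstrict : StrictPrefs sat) (hM : IsMatching sat M) {v u : V}
    (hu : 0 < M v u) (hu1 : M v u < 1) :
    ∃ z, 0 < M v z ∧ M v z < 1 ∧ wge sat M v z < 1 := by
  by_cases hfull : ∑ y, M v y < 1
  · exact ⟨u, hu, hu1, (wge_le_sum hM v u).trans_lt hfull⟩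
  have hsplit := Finset.add_sum_erase Finset.univ (M v) (Finset.mem_univ u)
  obtain ⟨w, hwmem, hw⟩ : ∃ w ∈ Finset.univ.erase u, 0 < M v w := by
    by_contra! hcon
    linarith [Finset.sum_nonpos hcon]
  have hne : w ≠ u := Finset.ne_of_mem_erase hwmem
  have hle := Finset.single_le_sum (f := M v) (fun i _ => hM.nonneg v i) hwmem
  have hdeg := hM.degree_le_one v
  rcases lt_or_gt_of_ne (hstrict v w u (adj_of_pos hM hw) (adj_of_pos hM hu) hne) with h | h
  · exact ⟨u, hu, hu1, by linarith [wge_add_le_one hM h]⟩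
  · exact ⟨w, hw, by linarith, by linarith [wge_add_le_one hM h]⟩

/-- under strict preferences, every agent matched in an ordinally stable
fractional matching is fully matched; hence matched and fully matched coincide. -/
theorem matched_iff_fullyMatched_of_ordinallyStable [Fintype V]
    (sat : V → V → ℚ) (hinst : IsInstance sat) (hstrict : StrictPrefs sat)
    (M : V → V → ℝ) (hM : IsMatching sat M) (hOS : OrdStable sat M) :
    (∀ v, 0 < ∑ u, M v u → ∑ u, M v u = 1) ∧
    (∀ v, 0 < ∑ u, M v u ↔ ∑ u, M v u = 1) := by
  have key : ∀ v, 0 < ∑ u, M v u → ∑ u, M v u = 1 := by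
    intro x hx
    by_contra hx1
    have hlt : ∑ u, M x u < 1 := lt_of_le_of_ne (hM.degree_le_one x) hx1
    obtain ⟨y, -, hy⟩ : ∃ y ∈ Finset.univ, 0 < M x y := by
      by_contra! hcon
      linarith [Finset.sum_nonpos hcon]
    have hy1 : M x y < 1 :=
      (Finset.single_le_sum (f := M x) (fun i _ => hM.nonneg x i) (Finset.mem_univ y)).trans_lt hlt
    have hchild : ∀ v : {v : V // ∃ u, 0 < M v u ∧ M v u < 1},
        ∃ c : {v : V // ∃ u, 0 < M v u ∧ M v u < 1},
          0 < M c.1 v.1 ∧ 1 ≤ wge sat M c.1 v.1 := by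
      rintro ⟨v, u, hu, hu1⟩
      obtain ⟨z, hz, hz1, hwz⟩ := exists_child hstrict hM hu hu1
      have hstab : 1 ≤ wge sat M z v := by
        by_contra! hcon
        exact hOS v z (adj_of_pos hM hz) ⟨hwz, hcon⟩
      rw [hM.symm] at hz hz1
      exact ⟨⟨z, v, hz, hz1⟩, hz, hstab⟩
    choose f hfpos hfwge using hchild
    have hinj : Function.Injective f := by
      intro v w hvw
      have hw := hfpos w
      have hw' := hfwge w
      rw [← hvw] at hw hw'
      exact Subtype.ext (eq_of_one_le_wge hstrict hM (hfpos v) hw (hfwge v) hw')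
    obtain ⟨v, hv⟩ := Finite.surjective_of_injective hinj ⟨x, y, hy, hy1⟩
    have h := hfwge v
    rw [hv] at h
    linarith [wge_le_sum hM x v.1]
  exact ⟨key, fun v => ⟨key v, fun h => h ▸ one_pos⟩⟩
end

section
/- Let (G, sat) be an instance with cardinal preferences (ties allowed), let M' be an ordinally stable fractional matching of (G, sat) under which every matched agent is fully matched, and let M be an arbitrary fractional matching of (G, sat) (in particular, any cardinally stable or ordinally stable one). Then #fully(M) ≤ 2 · #fully(M'). -/
/-!
Let `F` be the set of agents fully matched under `M'`. Ordinal stability forces every edge to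
have an endpoint in `F`: a non-blocking edge has an endpoint all of whose capacity is used, so
`F` is a vertex cover (`fully_or_fully_of_adj`). Hence an agent outside `F` that is fully matched
under `M` sends its whole unit of `M`-weight into `F`. Each agent of `F` receives at most one
unit, so there are at most `#F` such agents (`card_le_card_of_cover`); at most `#F` further agents
lie in `F` itself.
-/

open Finset
open scoped Classical

variable {V : Type*}

/-- The agents fully matched under an ordinally stable matching form a vertex cover. -/
lemma fully_or_fully_of_adj [Fintype V] {sat : V → V → ℚ} {M : V → V → ℝ}
    (hM : IsMatching sat M) (hOS : OrdStable sat M) {u v : V} (h : Adj sat u v) :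
    ∑ z, M u z = 1 ∨ ∑ z, M v z = 1 := by
  have wge_le (x y : V) : wge sat M x y ≤ ∑ z, M x z :=
    Finset.sum_le_sum_of_subset_of_nonneg (Finset.filter_subset _ _)
      fun z _ _ => hM.nonneg x z
  by_contra! hne
  exact hOS u v h ⟨(wge_le u v).trans_lt (lt_of_le_of_ne (hM.degree_le_one u) hne.1),
    (wge_le v u).trans_lt (lt_of_le_of_ne (hM.degree_le_one v) hne.2)⟩

/-- If all `M`-weight of the fully matched agents in `B` goes into `F`, then `#B ≤ #F`, by
double counting the weight between `B` and `F`. -/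
lemma card_le_card_of_cover [Fintype V] {sat : V → V → ℚ} {M : V → V → ℝ}
    (hM : IsMatching sat M) (B F : Finset V) (hB : ∀ v ∈ B, ∑ u, M v u = 1)
    (hF : ∀ v ∈ B, ∀ u ∉ F, M v u = 0) : B.card ≤ F.card := by
  have key : (B.card : ℝ) ≤ F.card := by
    calc (B.card : ℝ) = ∑ v ∈ B, ∑ u ∈ F, M v u := by
          rw [Finset.card_eq_sum_ones, Nat.cast_sum]
          refine Finset.sum_congr rfl fun v hv => ?_
          rw [Finset.sum_subset (Finset.subset_univ F) fun u _ hu => hF v hv u hu, hB v hv,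
            Nat.cast_one]
      _ = ∑ u ∈ F, ∑ v ∈ B, M u v := by
          rw [Finset.sum_comm]
          exact Finset.sum_congr rfl fun u _ => Finset.sum_congr rfl fun v _ => hM.symm v u
      _ ≤ ∑ u ∈ F, (1 : ℝ) := Finset.sum_le_sum fun u _ =>
          (Finset.sum_le_sum_of_subset_of_nonneg (Finset.subset_univ B)
            fun v _ _ => hM.nonneg u v).trans (hM.degree_le_one u)
      _ = F.card := by simp
  exact_mod_cast key

/-- if `M'` is an ordinally stable fractional matching in which every
matched agent is fully matched, then any fractional matching `M` fully matches at most
twice as many agents as `M'` does. -/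
theorem two_approximation_of_fully_matched [Fintype V]
    (sat : V → V → ℚ) (hinst : IsInstance sat)
    (M' : V → V → ℝ) (hM' : IsMatching sat M') (hOS' : OrdStable sat M')
    (hfull' : ∀ v, 0 < ∑ u, M' v u → ∑ u, M' v u = 1)
    (M : V → V → ℝ) (hM : IsMatching sat M) :
    nfully M ≤ 2 * nfully M' := by
  unfold nfully
  set A := Finset.univ.filter (fun v => ∑ u, M v u = (1 : ℝ)) with hA
  set F := Finset.univ.filter (fun v => ∑ u, M' v u = (1 : ℝ)) with hF
  have hout : (A \ F).card ≤ F.card := by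
    refine card_le_card_of_cover hM _ _ (fun v hv => ?_) fun v hv u hu => ?_
    · exact (Finset.mem_filter.1 (Finset.mem_sdiff.1 hv).1).2
    · refine hM.support v u fun hadj => ?_
      rcases fully_or_fully_of_adj hM' hOS' hadj with h | h
      · exact (Finset.mem_sdiff.1 hv).2 (Finset.mem_filter.2 ⟨Finset.mem_univ v, h⟩)
      · exact hu (Finset.mem_filter.2 ⟨Finset.mem_univ u, h⟩)
  have hin : (A ∩ F).card ≤ F.card := Finset.card_le_card Finset.inter_subset_right
  have hsplit := Finset.card_sdiff_add_card_inter A F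
  omega
end

section
/- Let G = (V, E) be a graph with V = {v₁, …, v_n}, E = {e₁, …, e_m}, and assume 0.2·m² − 11.1 > n. Let G_E be the edge-gadget graph for G (with any nonnegative values sat(u_i, e_j^i) ≤ 5m on the cross edges) and let M be a cardinally stable fractional matching of G_E. Then the total welfare ω := Σ_z U_M(z), summed over all agents z ∈ {e_j, f_j, g_j, h_j, e_j^i, e_j^{i'} : j ∈ [m]} of the edge gadgets, satisfies ω ≤ 3m(2m² + 9). Moreover, if there exists an edge e_j = {v_i, v_{i'}} ∈ E such that U_M(u_i) < sat(u_i, e_j^i) and U_M(u_{i'}) < sat(u_{i'}, e_j^{i'}), then ω < 3m(2m² + 9) − n. -/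
/-!
Only eight edge types inside a gadget and the two cross edges at `e_j^i`, `e_j^{i'}` carry utility
for gadget agents. On each of the eight inner edges the two satisfactions sum to exactly
`2m² + 9`, so a gadget whose inner edges carry total weight `w` and whose cross edges carry
`x`, `y` has welfare `(2m² + 9) w + 5x + 7y` (`gadget_welfare`). The degree constraints of `h_j`,
`e_j^i`, `e_j^{i'}` give `w + x + y ≤ 3`, and `5, 7 ≤ 2m² + 9`, whence the bound
`3(2m² + 9)` per gadget, with no use of stability.

For the strict bound, if neither `u_i` nor `u_{i'}` is satisfied, stability of the cross edges
forces `U(e_j^i) ≥ 5` and `U(e_j^{i'}) ≥ 7`. Together with stability of `{e_j, e_j^i}` and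
`{g_j, h_j}` this is infeasible for a gadget matched perfectly inside, and quantitatively the
resulting linear programs give `w ≤ 3 - 1/10` (`inner_weight_le`). So this gadget loses at least
`(2m² + 9)(3 - w) - 5x - 7y ≥ m² / 5 > n`.
-/

open Finset
open scoped Classical

variable {V : Type*}

/-- The agents of the edge-gadget graph `G_E`: for each edge `e_j` of `G` (with lower
endpoint `lo j` and higher endpoint `hi j`) there are six agents
`inl (j, 0) = e_j`, `inl (j, 1) = f_j`, `inl (j, 2) = g_j`, `inl (j, 3) = h_j`,
`inl (j, 4) = e_j^i` and `inl (j, 5) = e_j^{i'}`, and for each vertex `v_i` of `G`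
there is an agent `inr i = u_i`. -/
abbrev GV (n m : ℕ) := (Fin m × Fin 6) ⊕ Fin n

/-- The satisfaction function of the edge-gadget graph `G_E`, where `s i j` is the
(arbitrary, nonnegative, bounded by `5m`) value `sat(u_i, e_j^i)`. -/
def gadgetSat (n m : ℕ) (lo hi : Fin m → Fin n) (s : Fin n → Fin m → ℚ) :
    GV n m → GV n m → ℚ := fun a b =>
  match a, b with
  | Sum.inl (j, c), Sum.inl (j', c') =>
    if j = j' then
      if c = 0 ∧ c' = 3 then 2 * (m : ℚ) ^ 2 + 8        -- sat(e_j, h_j)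
      else if c = 3 ∧ c' = 0 then 1                     -- sat(h_j, e_j)
      else if c = 0 ∧ c' = 4 then 2 * (m : ℚ) ^ 2 + 2   -- sat(e_j, e_j^i)
      else if c = 4 ∧ c' = 0 then 7                     -- sat(e_j^i, e_j)
      else if c = 0 ∧ c' = 5 then 2 * (m : ℚ) ^ 2       -- sat(e_j, e_j^{i'})
      else if c = 5 ∧ c' = 0 then 9                     -- sat(e_j^{i'}, e_j)
      else if c = 2 ∧ c' = 4 then 2 * (m : ℚ) ^ 2 + 7   -- sat(g_j, e_j^i)
      else if c = 4 ∧ c' = 2 then 2                     -- sat(e_j^i, g_j)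
      else if c = 2 ∧ c' = 3 then 2 * (m : ℚ) ^ 2 + 5   -- sat(g_j, h_j)
      else if c = 3 ∧ c' = 2 then 4                     -- sat(h_j, g_j)
      else if c = 2 ∧ c' = 5 then 2 * (m : ℚ) ^ 2 + 4   -- sat(g_j, e_j^{i'})
      else if c = 5 ∧ c' = 2 then 5                     -- sat(e_j^{i'}, g_j)
      else if c = 1 ∧ c' = 4 then 2 * (m : ℚ) ^ 2 + 6   -- sat(f_j, e_j^i)
      else if c = 4 ∧ c' = 1 then 3                     -- sat(e_j^i, f_j)
      else if c = 1 ∧ c' = 5 then 2 * (m : ℚ) ^ 2 + 5   -- sat(f_j, e_j^{i'})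
      else if c = 5 ∧ c' = 1 then 4                     -- sat(e_j^{i'}, f_j)
      else 0
    else 0
  | Sum.inl (j, c), Sum.inr i =>
    if c = 4 ∧ i = lo j then 5                              -- sat(e_j^i, u_i)
    else if c = 5 ∧ i = hi j then 7                         -- sat(e_j^{i'}, u_{i'})
    else 0
  | Sum.inr i, Sum.inl (j, c) =>
    if c = 4 ∧ i = lo j then s i j                          -- sat(u_i, e_j^i)
    else if c = 5 ∧ i = hi j then s i j                     -- sat(u_{i'}, e_j^{i'})
    else 0
  | Sum.inr _, Sum.inr _ => 0


/-- The linear-programming core: the weights of the inner edges `a = {e,h}`, `b = {e,e^i}`,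
`c = {e,e^{i'}}`, `d = {g,e^i}`, `p = {g,h}`, `q = {g,e^{i'}}`, `r = {f,e^i}`, `t = {f,e^{i'}}`
of one gadget sum to at most `3 - 1/10`; `x`, `y` are the weights of the cross edges. The two
disjunctions express stability of `{e, e^i}` and `{g, h}` after removing the common term `2m²`
by means of the degree constraints of `e` and `g`. -/
lemma inner_weight_le (a b c d p q r t x y : ℝ)
    (ha : 0 ≤ a) (hd : 0 ≤ d) (hq : 0 ≤ q) (hx : 0 ≤ x)
    (he : a + b + c ≤ 1) (hg : d + p + q ≤ 1)
    (hl : b + d + r + x ≤ 1) (hu : c + q + t + y ≤ 1)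
    (hUl : 5 ≤ 7 * b + 2 * d + 3 * r + 5 * x) (hUu : 7 ≤ 9 * c + 5 * q + 4 * t + 7 * y)
    (hel : 2 ≤ 8 * a + 2 * b ∨ 7 ≤ 7 * b + 2 * d + 3 * r + 5 * x)
    (hgh : 5 ≤ 7 * d + 5 * p + 4 * q ∨ 4 ≤ a + 4 * p) :
    a + b + c + d + p + q + r + t ≤ 3 - 1 / 10 := by
  rcases hel with hel | hel <;> rcases hgh with hgh | hgh <;> linarith

section Gadget

variable {n m : ℕ} {lo hi : Fin m → Fin n} {s : Fin n → Fin m → ℚ} {M : GV n m → GV n m → ℝ}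

lemma util_e (j : Fin m) : util (gadgetSat n m lo hi s) M (Sum.inl (j, 0)) =
    (2 * (m : ℝ) ^ 2 + 8) * M (Sum.inl (j, 0)) (Sum.inl (j, 3))
    + (2 * (m : ℝ) ^ 2 + 2) * M (Sum.inl (j, 0)) (Sum.inl (j, 4))
    + 2 * (m : ℝ) ^ 2 * M (Sum.inl (j, 0)) (Sum.inl (j, 5)) := by
  simp [util, Fintype.sum_prod_type, Fin.sum_univ_six, gadgetSat,
    apply_ite (Rat.cast : ℚ → ℝ), ite_mul]

lemma util_f (j : Fin m) : util (gadgetSat n m lo hi s) M (Sum.inl (j, 1)) =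
    (2 * (m : ℝ) ^ 2 + 6) * M (Sum.inl (j, 1)) (Sum.inl (j, 4))
    + (2 * (m : ℝ) ^ 2 + 5) * M (Sum.inl (j, 1)) (Sum.inl (j, 5)) := by
  simp [util, Fintype.sum_prod_type, Fin.sum_univ_six, gadgetSat,
    apply_ite (Rat.cast : ℚ → ℝ), ite_mul]

lemma util_g (j : Fin m) : util (gadgetSat n m lo hi s) M (Sum.inl (j, 2)) =
    (2 * (m : ℝ) ^ 2 + 5) * M (Sum.inl (j, 2)) (Sum.inl (j, 3))
    + (2 * (m : ℝ) ^ 2 + 7) * M (Sum.inl (j, 2)) (Sum.inl (j, 4))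
    + (2 * (m : ℝ) ^ 2 + 4) * M (Sum.inl (j, 2)) (Sum.inl (j, 5)) := by
  simp [util, Fintype.sum_prod_type, Fin.sum_univ_six, gadgetSat,
    apply_ite (Rat.cast : ℚ → ℝ), ite_mul]

lemma util_h (j : Fin m) : util (gadgetSat n m lo hi s) M (Sum.inl (j, 3)) =
    M (Sum.inl (j, 3)) (Sum.inl (j, 0)) + 4 * M (Sum.inl (j, 3)) (Sum.inl (j, 2)) := by
  simp [util, Fintype.sum_prod_type, Fin.sum_univ_six, gadgetSat,
    apply_ite (Rat.cast : ℚ → ℝ), ite_mul]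

lemma util_lo (j : Fin m) : util (gadgetSat n m lo hi s) M (Sum.inl (j, 4)) =
    7 * M (Sum.inl (j, 4)) (Sum.inl (j, 0)) + 3 * M (Sum.inl (j, 4)) (Sum.inl (j, 1))
    + 2 * M (Sum.inl (j, 4)) (Sum.inl (j, 2)) + 5 * M (Sum.inl (j, 4)) (Sum.inr (lo j)) := by
  simp [util, Fintype.sum_prod_type, Fin.sum_univ_six, gadgetSat,
    apply_ite (Rat.cast : ℚ → ℝ), ite_mul]

lemma util_hi (j : Fin m) : util (gadgetSat n m lo hi s) M (Sum.inl (j, 5)) =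
    9 * M (Sum.inl (j, 5)) (Sum.inl (j, 0)) + 4 * M (Sum.inl (j, 5)) (Sum.inl (j, 1))
    + 5 * M (Sum.inl (j, 5)) (Sum.inl (j, 2)) + 7 * M (Sum.inl (j, 5)) (Sum.inr (hi j)) := by
  simp [util, Fintype.sum_prod_type, Fin.sum_univ_six, gadgetSat,
    apply_ite (Rat.cast : ℚ → ℝ), ite_mul]

/-- Total weight of the eight inner edges of gadget `j`. -/
def innerWeight (M : GV n m → GV n m → ℝ) (j : Fin m) : ℝ :=
  M (Sum.inl (j, 0)) (Sum.inl (j, 3)) + M (Sum.inl (j, 0)) (Sum.inl (j, 4))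
  + M (Sum.inl (j, 0)) (Sum.inl (j, 5)) + M (Sum.inl (j, 2)) (Sum.inl (j, 4))
  + M (Sum.inl (j, 2)) (Sum.inl (j, 3)) + M (Sum.inl (j, 2)) (Sum.inl (j, 5))
  + M (Sum.inl (j, 1)) (Sum.inl (j, 4)) + M (Sum.inl (j, 1)) (Sum.inl (j, 5))

lemma gadget_welfare (hM : IsMatching (gadgetSat n m lo hi s) M) (j : Fin m) :
    ∑ c : Fin 6, util (gadgetSat n m lo hi s) M (Sum.inl (j, c)) =
      (2 * (m : ℝ) ^ 2 + 9) * innerWeight M j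
      + 5 * M (Sum.inl (j, 4)) (Sum.inr (lo j)) + 7 * M (Sum.inl (j, 5)) (Sum.inr (hi j)) := by
  rw [Fin.sum_univ_six, util_e, util_f, util_g, util_h, util_lo, util_hi, innerWeight,
    hM.symm (Sum.inl (j, 3)) (Sum.inl (j, 0)), hM.symm (Sum.inl (j, 3)) (Sum.inl (j, 2)),
    hM.symm (Sum.inl (j, 4)) (Sum.inl (j, 0)), hM.symm (Sum.inl (j, 4)) (Sum.inl (j, 1)),
    hM.symm (Sum.inl (j, 4)) (Sum.inl (j, 2)), hM.symm (Sum.inl (j, 5)) (Sum.inl (j, 0)),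
    hM.symm (Sum.inl (j, 5)) (Sum.inl (j, 1)), hM.symm (Sum.inl (j, 5)) (Sum.inl (j, 2))]
  ring

lemma sum_subset_le_one (hM : IsMatching (gadgetSat n m lo hi s) M) (v : GV n m)
    (S : Finset (GV n m)) : ∑ u ∈ S, M v u ≤ 1 :=
  (Finset.sum_le_univ_sum_of_nonneg (hM.nonneg v)).trans (hM.degree_le_one v)

lemma degree_e (hM : IsMatching (gadgetSat n m lo hi s) M) (j : Fin m) :
    M (Sum.inl (j, 0)) (Sum.inl (j, 3)) + M (Sum.inl (j, 0)) (Sum.inl (j, 4))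
      + M (Sum.inl (j, 0)) (Sum.inl (j, 5)) ≤ 1 := by
  simpa [add_assoc] using sum_subset_le_one hM (Sum.inl (j, 0))
    {Sum.inl (j, 3), Sum.inl (j, 4), Sum.inl (j, 5)}

lemma degree_g (hM : IsMatching (gadgetSat n m lo hi s) M) (j : Fin m) :
    M (Sum.inl (j, 2)) (Sum.inl (j, 4)) + M (Sum.inl (j, 2)) (Sum.inl (j, 3))
      + M (Sum.inl (j, 2)) (Sum.inl (j, 5)) ≤ 1 := by
  simpa [add_assoc] using sum_subset_le_one hM (Sum.inl (j, 2))
    {Sum.inl (j, 4), Sum.inl (j, 3), Sum.inl (j, 5)}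

lemma degree_h (hM : IsMatching (gadgetSat n m lo hi s) M) (j : Fin m) :
    M (Sum.inl (j, 0)) (Sum.inl (j, 3)) + M (Sum.inl (j, 2)) (Sum.inl (j, 3)) ≤ 1 := by
  rw [hM.symm _ (Sum.inl (j, 3)), hM.symm _ (Sum.inl (j, 3))]
  simpa using sum_subset_le_one hM (Sum.inl (j, 3)) {Sum.inl (j, 0), Sum.inl (j, 2)}

lemma degree_lo (hM : IsMatching (gadgetSat n m lo hi s) M) (j : Fin m) :
    M (Sum.inl (j, 0)) (Sum.inl (j, 4)) + M (Sum.inl (j, 2)) (Sum.inl (j, 4))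
      + M (Sum.inl (j, 1)) (Sum.inl (j, 4)) + M (Sum.inl (j, 4)) (Sum.inr (lo j)) ≤ 1 := by
  rw [hM.symm (Sum.inl (j, 0)), hM.symm (Sum.inl (j, 2)), hM.symm (Sum.inl (j, 1))]
  simpa [add_assoc] using sum_subset_le_one hM (Sum.inl (j, 4))
    {Sum.inl (j, 0), Sum.inl (j, 2), Sum.inl (j, 1), Sum.inr (lo j)}

lemma degree_hi (hM : IsMatching (gadgetSat n m lo hi s) M) (j : Fin m) :
    M (Sum.inl (j, 0)) (Sum.inl (j, 5)) + M (Sum.inl (j, 2)) (Sum.inl (j, 5))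
      + M (Sum.inl (j, 1)) (Sum.inl (j, 5)) + M (Sum.inl (j, 5)) (Sum.inr (hi j)) ≤ 1 := by
  rw [hM.symm (Sum.inl (j, 0)), hM.symm (Sum.inl (j, 2)), hM.symm (Sum.inl (j, 1))]
  simpa [add_assoc] using sum_subset_le_one hM (Sum.inl (j, 5))
    {Sum.inl (j, 0), Sum.inl (j, 2), Sum.inl (j, 1), Sum.inr (hi j)}

/-- Obtained by adding up the degree constraints of `h_j`, `e_j^i` and `e_j^{i'}`. -/
lemma innerWeight_add_cross_le (hM : IsMatching (gadgetSat n m lo hi s) M) (j : Fin m) :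
    innerWeight M j + M (Sum.inl (j, 4)) (Sum.inr (lo j))
      + M (Sum.inl (j, 5)) (Sum.inr (hi j)) ≤ 3 := by
  have := degree_h hM j
  have := degree_lo hM j
  have := degree_hi hM j
  unfold innerWeight
  linarith

/-- A gadget's deficit against `3(2m² + 9)` is at least `2m²` times the weight missing on its
inner edges. -/
lemma gadget_welfare_le (hM : IsMatching (gadgetSat n m lo hi s) M) (j : Fin m) :
    ∑ c : Fin 6, util (gadgetSat n m lo hi s) M (Sum.inl (j, c)) ≤
      3 * (2 * (m : ℝ) ^ 2 + 9) - 2 * (m : ℝ) ^ 2 * (3 - innerWeight M j) := by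
  rw [gadget_welfare hM]
  have := innerWeight_add_cross_le hM j
  have := hM.nonneg (Sum.inl (j, 4)) (Sum.inr (lo j))
  have := hM.nonneg (Sum.inl (j, 5)) (Sum.inr (hi j))
  linarith

lemma innerWeight_le_three (hM : IsMatching (gadgetSat n m lo hi s) M) (j : Fin m) :
    innerWeight M j ≤ 3 := by
  have := innerWeight_add_cross_le hM j
  have := hM.nonneg (Sum.inl (j, 4)) (Sum.inr (lo j))
  have := hM.nonneg (Sum.inl (j, 5)) (Sum.inr (hi j))
  linarith

/-- If both endpoint agents of edge `j` prefer their gadget neighbour to their current utility,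
a tenth of a unit of weight is missing on the inner edges of gadget `j`. -/
lemma innerWeight_le_of_unsatisfied (hM : IsMatching (gadgetSat n m lo hi s) M)
    (hCS : CardStable (gadgetSat n m lo hi s) M) (j : Fin m)
    (hlo : util (gadgetSat n m lo hi s) M (Sum.inr (lo j)) < ((s (lo j) j : ℚ) : ℝ))
    (hhi : util (gadgetSat n m lo hi s) M (Sum.inr (hi j)) < ((s (hi j) j : ℚ) : ℝ)) :
    innerWeight M j ≤ 3 - 1 / 10 := by
  -- the cross edges do not block although `u_i` and `u_{i'}` are unsatisfied
  have hUl : 5 ≤ util (gadgetSat n m lo hi s) M (Sum.inl (j, 4)) := by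
    by_contra! hlt
    exact hCS (Sum.inl (j, 4)) (Sum.inr (lo j)) (Or.inl (by simp [gadgetSat]))
      ⟨by simpa [gadgetSat] using hlt, by simpa [gadgetSat] using hlo⟩
  have hUu : 7 ≤ util (gadgetSat n m lo hi s) M (Sum.inl (j, 5)) := by
    by_contra! hlt
    exact hCS (Sum.inl (j, 5)) (Sum.inr (hi j)) (Or.inl (by simp [gadgetSat]))
      ⟨by simpa [gadgetSat] using hlt, by simpa [gadgetSat] using hhi⟩
  have hel : 2 * (m : ℝ) ^ 2 + 2 ≤ util (gadgetSat n m lo hi s) M (Sum.inl (j, 0)) ∨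
      7 ≤ util (gadgetSat n m lo hi s) M (Sum.inl (j, 4)) := by
    by_contra! hlt
    exact hCS (Sum.inl (j, 0)) (Sum.inl (j, 4)) (Or.inr (by simp [gadgetSat]))
      ⟨by simpa [gadgetSat] using hlt.1, by simpa [gadgetSat] using hlt.2⟩
  have hgh : 2 * (m : ℝ) ^ 2 + 5 ≤ util (gadgetSat n m lo hi s) M (Sum.inl (j, 2)) ∨
      4 ≤ util (gadgetSat n m lo hi s) M (Sum.inl (j, 3)) := by
    by_contra! hlt
    exact hCS (Sum.inl (j, 2)) (Sum.inl (j, 3)) (Or.inr (by simp [gadgetSat]))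
      ⟨by simpa [gadgetSat] using hlt.1, by simpa [gadgetSat] using hlt.2⟩
  rw [util_lo, hM.symm (Sum.inl (j, 4)) (Sum.inl (j, 0)),
    hM.symm (Sum.inl (j, 4)) (Sum.inl (j, 1)), hM.symm (Sum.inl (j, 4)) (Sum.inl (j, 2))]
    at hUl hel
  rw [util_hi, hM.symm (Sum.inl (j, 5)) (Sum.inl (j, 0)),
    hM.symm (Sum.inl (j, 5)) (Sum.inl (j, 1)), hM.symm (Sum.inl (j, 5)) (Sum.inl (j, 2))] at hUu
  rw [util_e] at hel
  rw [util_g, util_h, hM.symm (Sum.inl (j, 3)) (Sum.inl (j, 0)),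
    hM.symm (Sum.inl (j, 3)) (Sum.inl (j, 2))] at hgh
  have hT : 0 ≤ 2 * (m : ℝ) ^ 2 := by positivity
  have hde := mul_le_mul_of_nonneg_left (degree_e hM j) hT
  have hdg := mul_le_mul_of_nonneg_left (degree_g hM j) hT
  refine inner_weight_le _ _ _ _ _ _ _ _ _ _ (hM.nonneg _ _) (hM.nonneg _ _) (hM.nonneg _ _)
    (hM.nonneg _ (Sum.inr (lo j))) (degree_e hM j) (degree_g hM j)
    (degree_lo hM j) (degree_hi hM j) (by linarith) (by linarith)
    (hel.imp (fun h => by linarith) (fun h => by linarith))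
    (hgh.imp (fun h => by linarith) (fun h => by linarith))

end Gadget

/-- the total welfare received by the agents of the edge gadgets under a
cardinally stable fractional matching is at most `3m(2m² + 9)`; and it is strictly less
than `3m(2m² + 9) − n` as soon as some edge `e_j = {v_i, v_{i'}}` of `G` has
`U_M(u_i) < sat(u_i, e_j^i)` and `U_M(u_{i'}) < sat(u_{i'}, e_j^{i'})`. -/
theorem edgeGadget_welfare_bound
    (n m : ℕ) (lo hi : Fin m → Fin n)
    (hlh : ∀ j, lo j < hi j)
    (hinj : Function.Injective (fun j => (lo j, hi j)))
    (hbig : (n : ℚ) < (2 / 10) * (m : ℚ) ^ 2 - 111 / 10)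
    (s : Fin n → Fin m → ℚ)
    (hs0 : ∀ i j, 0 ≤ s i j) (hs5 : ∀ i j, s i j ≤ 5 * m)
    (M : GV n m → GV n m → ℝ)
    (hM : IsMatching (gadgetSat n m lo hi s) M)
    (hCS : CardStable (gadgetSat n m lo hi s) M) :
    (∑ a : Fin m × Fin 6, util (gadgetSat n m lo hi s) M (Sum.inl a))
        ≤ 3 * (m : ℝ) * (2 * (m : ℝ) ^ 2 + 9) ∧
    ((∃ j : Fin m,
        util (gadgetSat n m lo hi s) M (Sum.inr (lo j)) < ((s (lo j) j : ℚ) : ℝ) ∧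
        util (gadgetSat n m lo hi s) M (Sum.inr (hi j)) < ((s (hi j) j : ℚ) : ℝ)) →
      (∑ a : Fin m × Fin 6, util (gadgetSat n m lo hi s) M (Sum.inl a))
        < 3 * (m : ℝ) * (2 * (m : ℝ) ^ 2 + 9) - n) := by
  have hle : ∀ j : Fin m, ∑ c : Fin 6, util (gadgetSat n m lo hi s) M (Sum.inl (j, c)) ≤
      3 * (2 * (m : ℝ) ^ 2 + 9) := by
    intro j
    have h := mul_nonneg (by positivity : 0 ≤ 2 * (m : ℝ) ^ 2)
      (sub_nonneg.2 (innerWeight_le_three hM j))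
    linarith [gadget_welfare_le hM j]
  have hconst : ∑ _j : Fin m, 3 * (2 * (m : ℝ) ^ 2 + 9) = 3 * (m : ℝ) * (2 * (m : ℝ) ^ 2 + 9) := by
    simp
    ring
  rw [Fintype.sum_prod_type]
  refine ⟨(Finset.sum_le_sum fun j _ => hle j).trans_eq hconst, ?_⟩
  rintro ⟨j, hlo, hhi⟩
  have hbig' : (n : ℝ) < 2 / 10 * (m : ℝ) ^ 2 - 111 / 10 := by
    have h : ((n : ℚ) : ℝ) < ((2 / 10 * (m : ℚ) ^ 2 - 111 / 10 : ℚ) : ℝ) := Rat.cast_lt.2 hbig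
    push_cast at h
    exact h
  have hj : ∑ c : Fin 6, util (gadgetSat n m lo hi s) M (Sum.inl (j, c)) <
      3 * (2 * (m : ℝ) ^ 2 + 9) - n := by
    have hgap : 1 / 10 ≤ 3 - innerWeight M j := by
      linarith [innerWeight_le_of_unsatisfied hM hCS j hlo hhi]
    have h := mul_le_mul_of_nonneg_left hgap (by positivity : 0 ≤ 2 * (m : ℝ) ^ 2)
    linarith [gadget_welfare_le hM j]
  have hrest := Finset.sum_le_sum (s := Finset.univ.erase j) fun k _ => hle k
  rw [← Finset.add_sum_erase _ _ (Finset.mem_univ j)] at hconst ⊢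
  linarith
end
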